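/- arXiv:2204.06151 — 5 statements merged into one kernel-verified Lean document; each statement's English description precedes it below -/
import Mathlib

section
/- Suppose P satisfies axioms (P6) and (H0). Then there exists a constant D_1 > 0 such that for every generator s ∈ S and every reduced P-product u = (u_1,…,u_k) with u_1⋯u_k = s in G, every path in Γ(G,S) defined by u based at 1 has diameter at most D_1. -/
open Metric Set

section Pregroup

variable {G : Type*} [Group G]

/-- A reduced `P`-product: a nonempty tuple of elements of `P` such that no two
consecutive entries multiply into `P`. -/
def IsReducedProd (P : Set G) (u : List G) : Prop :=
  u ≠ [] ∧ (∀ x ∈ u, x ∈ P) ∧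
    ∀ i : ℕ, ∀ h : i + 1 < u.length, u[i]'(Nat.lt_of_succ_lt h) * u[i + 1]'h ∉ P

/-- `G` has a pregroup structure with respect to the subset `P ⊆ G`. -/
structure IsPregroupStructure (P : Set G) : Prop where
  one_mem : (1 : G) ∈ P
  inv_mem : ∀ x ∈ P, x⁻¹ ∈ P
  p5 : ∀ u ∈ P, ∀ v ∈ P, ∀ w ∈ P, ∀ z ∈ P,
    u * v ∈ P → v * w ∈ P → w * z ∈ P → u * v * w ∈ P ∨ v * w * z ∈ P
  exists_rep : ∀ g : G, ∃ u : List G, IsReducedProd P u ∧ u.prod = g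
  uniq : ∀ u v : List G, IsReducedProd P u → IsReducedProd P v → u.prod = v.prod →
    u.length = v.length ∧
      ∃ a : ℕ → G, a 0 = 1 ∧ a u.length = 1 ∧
        (∀ i : ℕ, 0 < i → i < u.length → a i ∈ P) ∧
        ∀ i : ℕ, ∀ hu : i < u.length, ∀ hv : i < v.length,
          (a i)⁻¹ * u[i] * a (i + 1) ∈ P ∧ v[i] = (a i)⁻¹ * u[i] * a (i + 1)

/-- `B_P = {b ∈ P : zb ∈ P and bz ∈ P for all z ∈ P}`. -/
def BP (P : Set G) : Set G :=
  {b | b ∈ P ∧ ∀ z ∈ P, z * b ∈ P ∧ b * z ∈ P}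

/-- Axiom (P6). -/
def AxiomP6 (P : Set G) : Prop :=
  ∀ x ∈ P, ∀ y ∈ P, x * y ∉ P → ∀ a ∈ P, x * a ∈ P → a⁻¹ * y ∈ P → a ∈ BP P

/-- Axiom (H0): `B_P` is finite. -/
def AxiomH0 (P : Set G) : Prop := (BP P).Finite

end Pregroup

section Geometry

variable {X : Type*} [MetricSpace X]

/-- A geodesic parametrization (by arclength on `[0, dist x y]`) from `x` to `y`. -/
def IsGeodesicParam (f : ℝ → X) (x y : X) : Prop :=
  f 0 = x ∧ f (dist x y) = y ∧
    ∀ a ∈ Icc (0 : ℝ) (dist x y), ∀ b ∈ Icc (0 : ℝ) (dist x y),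
      dist (f a) (f b) = |a - b|

/-- `s` is a geodesic segment from `x` to `y`. -/
def IsGeodesicSegment (s : Set X) (x y : X) : Prop :=
  ∃ f : ℝ → X, IsGeodesicParam f x y ∧ s = f '' Icc (0 : ℝ) (dist x y)

/-- A geodesic metric space: any two points are joined by a geodesic segment. -/
def IsGeodesicSpace (X : Type*) [MetricSpace X] : Prop :=
  ∀ x y : X, ∃ s : Set X, IsGeodesicSegment s x y

/-- A triangle with sides `s, t, r` is `C`-thin: each side lies in the closed
`C`-neighborhood of the union of the other two sides. -/
def ThinTriangle (C : ℝ) (s t r : Set X) : Prop :=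
  s ⊆ cthickening C (t ∪ r) ∧ t ⊆ cthickening C (s ∪ r) ∧ r ⊆ cthickening C (s ∪ t)

end Geometry

section Cayley

variable {G : Type*} [Group G] {X : Type*} [MetricSpace X]

/-- The word length of `g` with respect to the generating set `S`. -/
noncomputable def wordLength (S : Set G) (g : G) : ℕ :=
  sInf {n | ∃ l : List G, l.length = n ∧ (∀ x ∈ l, x ∈ S ∨ x⁻¹ ∈ S) ∧ l.prod = g}

/-- `ι : G → X` realizes the geodesic metric space `X` as the Cayley graph
`Γ(G,S)`: `S` generates `G`, the metric on vertices is the word metric, `X` is a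
geodesic space, and every point of `X` is within `1/2` of a vertex. -/
structure IsCayleyGraph (S : Set G) (ι : G → X) : Prop where
  generates : Subgroup.closure S = ⊤
  dist_eq : ∀ g h : G, dist (ι g) (ι h) = wordLength S (g⁻¹ * h)
  geodesic : IsGeodesicSpace X
  dense : ∀ x : X, ∃ g : G, dist x (ι g) ≤ 1 / 2

/-- Axiom (H1), with constant `C₁`: geodesic triangles on vertices `1, p, pq`
(`p, q ∈ P`) are `C₁`-thin. -/
def AxiomH1 (P : Set G) (ι : G → X) (C₁ : ℝ) : Prop :=
  ∀ p ∈ P, ∀ q ∈ P, ∀ s t r : Set X,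
    IsGeodesicSegment s (ι 1) (ι p) → IsGeodesicSegment t (ι p) (ι (p * q)) →
      IsGeodesicSegment r (ι 1) (ι (p * q)) → ThinTriangle C₁ s t r

/-- Axiom (H2), with constant `C₂`: if the Gromov product `(p⁻¹ · q)_1` exceeds
`C₂` then `pq ∈ P`. -/
def AxiomH2 (P : Set G) (ι : G → X) (C₂ : ℝ) : Prop :=
  ∀ p ∈ P, ∀ q ∈ P,
    (dist (ι 1) (ι p) + dist (ι 1) (ι q) - dist (ι p⁻¹) (ι q)) / 2 > C₂ → p * q ∈ P

/-- Axiom (H3), with constant `C₃`: every vertex on a geodesic from `1` to `p ∈ P`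
is a reduced product `p₁ p₂` with `|p₂| ≤ C₃`. -/
def AxiomH3 (P : Set G) (ι : G → X) (C₃ : ℝ) : Prop :=
  ∀ p ∈ P, ∀ s : Set X, IsGeodesicSegment s (ι 1) (ι p) →
    ∀ x : G, ι x ∈ s →
      ∃ p₁ p₂ : G, IsReducedProd P [p₁, p₂] ∧ p₁ * p₂ = x ∧ dist (ι 1) (ι p₂) ≤ C₃

/-- The path in `Γ(G,S)` defined by the `P`-product `u` based at `x`: a
concatenation of geodesic segments `[x u(i), x u(i+1)]`. -/
def IsPathOf (ι : G → X) (x : G) (u : List G) (pa : Set X) : Prop :=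
  ∃ segs : Fin u.length → Set X,
    (∀ i : Fin u.length,
      IsGeodesicSegment (segs i)
        (ι (x * (u.take i.1).prod)) (ι (x * (u.take (i.1 + 1)).prod))) ∧
    pa = ⋃ i, segs i

end Cayley

/-!
Write `u(i) = u₁⋯uᵢ`. If `u` and `v` are reduced `P`-products with the same value, uniqueness
gives `u(i) = v(i) aᵢ` with `aᵢ ∈ P`. Were `vᵢ aᵢ ∉ P`, then `(v₁, …, vᵢ, aᵢ)` would be a reduced
product of length `i + 1` for `u(i)`, which also has the reduced product `(u₁, …, uᵢ)` of length
`i`, contradicting uniqueness of the length; symmetrically `aᵢ⁻¹ vᵢ₊₁ ∈ P`. So (P6) forces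
`aᵢ ∈ B_P`: relative to one fixed `v`, the vertices of all the paths lie in the finite set
`⋃ i, v(i) B_P`.
-/

section ReducedProducts

variable {G : Type*} [Group G] {P : Set G} {u v : List G} {a x : G}

theorem take_prod_inv_mul_take_prod_eq_one (hlen : u.length = v.length) (huv : u.prod = v.prod)
    {i : ℕ} (hi : i = 0 ∨ v.length ≤ i) : (v.take i).prod⁻¹ * (u.take i).prod = 1 := by
  rcases hi with rfl | hi
  · simp
  · rw [List.take_of_length_le hi, List.take_of_length_le (hlen ▸ hi), huv, inv_mul_cancel]

theorem isReducedProd_iff_isChain :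
    IsReducedProd P u ↔ u ≠ [] ∧ (∀ x ∈ u, x ∈ P) ∧ u.IsChain fun x y => x * y ∉ P := by
  rw [IsReducedProd, List.isChain_iff_getElem]

namespace IsReducedProd

theorem of_isInfix (hu : IsReducedProd P u) (hvu : v <:+: u) (hv : v ≠ []) :
    IsReducedProd P v := by
  rw [isReducedProd_iff_isChain] at hu ⊢
  exact ⟨hv, fun x hx => hu.2.1 x (hvu.subset hx), hu.2.2.infix hvu⟩

theorem take (hu : IsReducedProd P u) {i : ℕ} (hi : i ≠ 0) : IsReducedProd P (u.take i) :=
  hu.of_isInfix (u.take_prefix i).isInfix (by simp [hi, hu.1])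

theorem drop (hu : IsReducedProd P u) {i : ℕ} (hi : i < u.length) : IsReducedProd P (u.drop i) :=
  hu.of_isInfix (u.drop_suffix i).isInfix (by simpa using hi)

theorem cons (hu : IsReducedProd P (x :: u)) (ha : a ∈ P) (hax : a * x ∉ P) :
    IsReducedProd P (a :: x :: u) := by
  rw [isReducedProd_iff_isChain] at hu ⊢
  exact ⟨List.cons_ne_nil _ _, List.forall_mem_cons.2 ⟨ha, hu.2.1⟩, hu.2.2.cons_cons hax⟩

theorem concat (hu : IsReducedProd P (u ++ [x])) (ha : a ∈ P) (hxa : x * a ∉ P) :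
    IsReducedProd P (u ++ [x] ++ [a]) := by
  rw [isReducedProd_iff_isChain] at hu ⊢
  refine ⟨by simp, List.forall_mem_append.2 ⟨hu.2.1, by simpa using ha⟩, ?_⟩
  exact hu.2.2.append (.singleton a) (by simpa using hxa)

end IsReducedProd

namespace IsPregroupStructure

theorem one_mem_BP (hP : IsPregroupStructure P) : (1 : G) ∈ BP P :=
  ⟨hP.one_mem, fun z hz => by simpa using hz⟩

theorem mul_head_mem (hP : IsPregroupStructure P) (hu : IsReducedProd P u)
    (hv : IsReducedProd P (x :: v)) (ha : a ∈ P) (hlen : u.length = (x :: v).length)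
    (hprod : u.prod = a * (x :: v).prod) : a * x ∈ P := by
  by_contra hax
  have hlen' : u.length = (a :: x :: v).length :=
    (hP.uniq _ _ hu (hv.cons ha hax) (by simpa using hprod)).1
  simp only [List.length_cons] at hlen hlen'
  omega

theorem last_mul_mem (hP : IsPregroupStructure P) (hu : IsReducedProd P u)
    (hv : IsReducedProd P (v ++ [x])) (ha : a ∈ P) (hlen : u.length = (v ++ [x]).length)
    (hprod : u.prod = (v ++ [x]).prod * a) : x * a ∈ P := by
  by_contra hxa
  have hlen' : u.length = (v ++ [x] ++ [a]).length :=
    (hP.uniq _ _ hu (hv.concat ha hxa) (by simpa [mul_assoc] using hprod)).1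
  simp only [List.length_append, List.length_singleton] at hlen hlen'
  omega

theorem take_prod_inv_mul_take_prod_mem (hP : IsPregroupStructure P) (hu : IsReducedProd P u)
    (hv : IsReducedProd P v) (huv : u.prod = v.prod) (i : ℕ) :
    (v.take i).prod⁻¹ * (u.take i).prod ∈ P := by
  obtain ⟨hlen, a, ha_zero, -, ha_mem, ha_eq⟩ := hP.uniq v u hv hu huv.symm
  have take_prod_eq : ∀ j ≤ v.length, (u.take j).prod = (v.take j).prod * a j := by
    intro j hj
    induction j with
    | zero => simp [ha_zero]
    | succ j ih =>
      rw [List.prod_take_succ u j (hlen ▸ hj), List.prod_take_succ v j hj, ih (by omega),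
        (ha_eq j hj (hlen ▸ hj)).2]
      group
  by_cases hi : i = 0 ∨ v.length ≤ i
  · exact take_prod_inv_mul_take_prod_eq_one hlen.symm huv hi ▸ hP.one_mem
  · rw [take_prod_eq i (by omega), inv_mul_cancel_left]
    exact ha_mem i (by omega) (by omega)

theorem getElem_mul_mem (hP : IsPregroupStructure P) (hu : IsReducedProd P u)
    (hv : IsReducedProd P v) (hlen : u.length = v.length) (ha : a ∈ P) {k : ℕ}
    (hk : k < v.length) (hprod : (u.take (k + 1)).prod = (v.take (k + 1)).prod * a) :
    v[k] * a ∈ P := by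
  have v_take : v.take (k + 1) = v.take k ++ [v[k]] := List.take_succ_eq_append_getElem hk
  exact hP.last_mul_mem (hu.take k.succ_ne_zero) (v_take ▸ hv.take k.succ_ne_zero) ha
    (by rw [← v_take, List.length_take, List.length_take, hlen]) (v_take ▸ hprod)

theorem mul_getElem_mem (hP : IsPregroupStructure P) (hu : IsReducedProd P u)
    (hv : IsReducedProd P v) (hlen : u.length = v.length) (ha : a ∈ P) {k : ℕ}
    (hk : k < v.length) (hprod : (u.drop k).prod = a * (v.drop k).prod) :
    a * v[k] ∈ P := by
  have v_drop : v.drop k = v[k] :: v.drop (k + 1) := List.drop_eq_getElem_cons hk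
  exact hP.mul_head_mem (hu.drop (hlen ▸ hk)) (v_drop ▸ hv.drop hk) ha
    (by rw [← v_drop, List.length_drop, List.length_drop, hlen]) (v_drop ▸ hprod)

theorem take_prod_inv_mul_take_prod_mem_BP (hP : IsPregroupStructure P) (hP6 : AxiomP6 P)
    (hu : IsReducedProd P u) (hv : IsReducedProd P v) (huv : u.prod = v.prod) (i : ℕ) :
    (v.take i).prod⁻¹ * (u.take i).prod ∈ BP P := by
  have hlen : u.length = v.length := (hP.uniq u v hu hv huv).1
  by_cases hi : i = 0 ∨ v.length ≤ i
  · exact take_prod_inv_mul_take_prod_eq_one hlen huv hi ▸ hP.one_mem_BP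
  obtain ⟨k, rfl⟩ : ∃ k, i = k + 1 := Nat.exists_eq_succ_of_ne_zero (by omega)
  have hk : k + 1 < v.length := by omega
  set a := (v.take (k + 1)).prod⁻¹ * (u.take (k + 1)).prod with ha_def
  have ha : a ∈ P := hP.take_prod_inv_mul_take_prod_mem hu hv huv (k + 1)
  have take_prod : (u.take (k + 1)).prod = (v.take (k + 1)).prod * a := by
    rw [ha_def, mul_inv_cancel_left]
  have drop_prod : (u.drop (k + 1)).prod = a⁻¹ * (v.drop (k + 1)).prod := by
    rw [← List.prod_take_mul_prod_drop u (k + 1), ← List.prod_take_mul_prod_drop v (k + 1),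
      take_prod, mul_assoc, mul_left_cancel_iff] at huv
    rw [← huv, inv_mul_cancel_left]
  exact hP6 v[k] (hv.2.1 _ (List.getElem_mem _)) v[k + 1] (hv.2.1 _ (List.getElem_mem _))
    (hv.2.2 k hk) a ha (hP.getElem_mul_mem hu hv hlen ha (by omega) take_prod)
    (hP.mul_getElem_mem hu hv hlen (hP.inv_mem a ha) hk drop_prod)

end IsPregroupStructure

/-- The partial products `u(i)` of all reduced `P`-products `u` with value `g`: the vertices of
the paths based at `1` that these products define. Indices `i` beyond the length of `u` are allowed
and give `g`. -/
def reducedPrefixes (P : Set G) (g : G) : Set G :=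
  {p | ∃ u : List G, IsReducedProd P u ∧ u.prod = g ∧ ∃ i : ℕ, (u.take i).prod = p}

theorem finite_reducedPrefixes (hP : IsPregroupStructure P) (hP6 : AxiomP6 P) (hH0 : AxiomH0 P)
    (g : G) : (reducedPrefixes P g).Finite := by
  obtain ⟨v, hv, rfl⟩ := hP.exists_rep g
  refine (v.inits.finite_toSet.image2 (fun w b => w.prod * b) hH0).subset ?_
  rintro - ⟨u, hu, huv, i, rfl⟩
  exact ⟨v.take i, (List.mem_inits _ _).2 (v.take_prefix i), _,
    hP.take_prod_inv_mul_take_prod_mem_BP hP6 hu hv huv i, mul_inv_cancel_left _ _⟩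

end ReducedProducts

section Paths

variable {X : Type*} [MetricSpace X] {s : Set X} {p q c : X} {R : ℝ}

namespace IsGeodesicSegment

theorem dist_add_dist (hs : IsGeodesicSegment s p q) {y : X} (hy : y ∈ s) :
    dist y p + dist y q = dist p q := by
  obtain ⟨f, ⟨hf_zero, hf_dist, hf⟩, rfl⟩ := hs
  obtain ⟨t, ht, rfl⟩ := hy
  have hp : dist (f t) p = t := by
    rw [← hf_zero, hf t ht 0 (left_mem_Icc.2 dist_nonneg), sub_zero, abs_of_nonneg ht.1]
  have hq : dist (f t) q = dist p q - t := by
    conv_lhs => rw [← hf_dist]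
    rw [hf t ht _ (right_mem_Icc.2 dist_nonneg), abs_sub_comm, abs_of_nonneg (sub_nonneg.2 ht.2)]
  rw [hp, hq, add_sub_cancel]

theorem subset_closedBall (hs : IsGeodesicSegment s p q) (hp : p ∈ closedBall c R)
    (hq : q ∈ closedBall c R) : s ⊆ closedBall c (2 * R) := by
  intro y hy
  rw [mem_closedBall] at *
  linarith [hs.dist_add_dist hy, dist_triangle y p c, dist_triangle y q c,
    dist_triangle_right p q c]

end IsGeodesicSegment

theorem IsPathOf.subset_closedBall {G : Type*} [Group G] {ι : G → X} {x : G} {u : List G}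
    {path : Set X} (hpath : IsPathOf ι x u path)
    (hu : ∀ i : ℕ, ι (x * (u.take i).prod) ∈ closedBall c R) : path ⊆ closedBall c (2 * R) := by
  obtain ⟨segs, hsegs, rfl⟩ := hpath
  exact iUnion_subset fun i => (hsegs i).subset_closedBall (hu i) (hu (i + 1))

end Paths

theorem generator_paths_bounded_diameter_general {G : Type*} [Group G] {X : Type*} [MetricSpace X]
    {T : Set G} (hT : T.Finite) (ι : G → X) (x : G) {P : Set G} (hP : IsPregroupStructure P)
    (hP6 : AxiomP6 P) (hH0 : AxiomH0 P) :
    ∃ D > (0 : ℝ), ∀ g ∈ T, ∀ u : List G, IsReducedProd P u → u.prod = g →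
      ∀ path : Set X, IsPathOf ι x u path → Bornology.IsBounded path ∧ diam path ≤ D := by
  have vertices_finite : ((fun p => ι (x * p)) '' ⋃ g ∈ T, reducedPrefixes P g).Finite :=
    (hT.biUnion fun g _ => finite_reducedPrefixes hP hP6 hH0 g).image _
  obtain ⟨R, hR, vertices_subset⟩ := vertices_finite.isBounded.subset_closedBall_lt 0 (ι x)
  refine ⟨2 * (2 * R), by positivity, fun g hg u hu hug path hpath => ?_⟩
  have path_subset : path ⊆ closedBall (ι x) (2 * R) := hpath.subset_closedBall fun i =>
    vertices_subset (mem_image_of_mem _ (mem_biUnion hg ⟨u, hu, hug, i, rfl⟩))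
  exact ⟨isBounded_closedBall.subset path_subset,
    (diam_mono path_subset isBounded_closedBall).trans (diam_closedBall (by positivity))⟩

/-- paths defined by reduced products representing a generator have
uniformly bounded diameter. -/
theorem generator_paths_bounded_diameter {G : Type*} [Group G] {X : Type*} [MetricSpace X]
    (S : Set G) (hSfin : S.Finite) (ι : G → X) (hX : IsCayleyGraph S ι)
    (P : Set G) (hP : IsPregroupStructure P)
    (hP6 : AxiomP6 P) (hH0 : AxiomH0 P) :
    ∃ D₁ > (0 : ℝ), ∀ s ∈ S, ∀ u : List G, IsReducedProd P u → u.prod = s →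
      ∀ pa : Set X, IsPathOf ι 1 u pa → Metric.diam pa ≤ D₁ := by
  obtain ⟨D, hD, h⟩ := generator_paths_bounded_diameter_general hSfin ι 1 hP hP6 hH0
  exact ⟨D, hD, fun s hs u hu hus pa hpa => (h s hs u hu hus pa hpa).2⟩
end

section
/- Suppose P satisfies axioms (P6), (H0) and (H1), with constants C_0 and C_1. Then there exists D_3 > 0 (one may take D_3 = C_0 + 3C_1) such that for all f, g ∈ G represented by reduced P-products u = (u_1,…,u_k) and v = (v_1,…,v_m) respectively, and every reduced P-product w = (w_1,…,w_n) representing fg, the triangle in Γ(G,S) formed by a path defined by u based at 1 (from 1 to f), a path defined by v based at f (from f to fg), and a path defined by w based at 1 (from 1 to fg) is D_3-thin: each of the three paths lies in the closed D_3-neighborhood of the union of the other two. -/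
open Metric Set

/-!
Vertices of paths are compared modulo the finite subgroup `B_P`. Reducing the product `u v` gives,
up to `B_P`, a tripod: every edge of the path `u` survives in the path `w`, or cancels against an
edge of the path `v`, or (at the one spot where a letter of `u` and a letter of `v` merge into a
letter of `w`) is a side of a triangle with one edge of each. By (P6) the edges modulo `B_P` do not
depend on the choice of the reduced product `w`. Matching an edge with one that has the same
endpoints modulo `B_P` costs two `P`-triangles and the diameter of `B_P`, and the exceptional
triangle costs one more `P`-triangle.

Applying this to `(u, v, w)`, `(v, w⁻¹, u⁻¹)` and `(w, v⁻¹, u)` treats the three sides.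

Since left translations of `G` need not extend to `X`, (H1) cannot be translated to other base
points. It is used instead through the sets of vertices lying between two given vertices, which are
translation invariant. Every point of a geodesic is close to such a vertex because distances
between vertices are integers.
-/

section BaseSubgroup

variable {G : Type*} [Group G] {P : Set G}

/-- The set `B_P` of a pregroup as a subgroup of `G`. Vertices of paths are compared through their
left cosets `x B_P`. -/
def bpSubgroup (hP : IsPregroupStructure P) : Subgroup G where
  carrier := BP P
  one_mem' := ⟨hP.one_mem, fun z hz => by simpa using hz⟩
  mul_mem' {b c} hb hc := by
    refine ⟨(hb.2 c hc.1).2, fun z hz => ⟨?_, ?_⟩⟩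
    · simpa only [mul_assoc] using (hc.2 _ (hb.2 z hz).1).1
    · simpa only [mul_assoc] using (hb.2 _ (hc.2 z hz).2).2
  inv_mem' {b} hb := by
    refine ⟨hP.inv_mem b hb.1, fun z hz => ⟨?_, ?_⟩⟩
    · simpa using hP.inv_mem _ (hb.2 _ (hP.inv_mem z hz)).2
    · simpa using hP.inv_mem _ (hb.2 _ (hP.inv_mem z hz)).1

theorem mem_bpSubgroup {hP : IsPregroupStructure P} {b : G} : b ∈ bpSubgroup hP ↔ b ∈ BP P :=
  Iff.rfl

theorem mul_bp_mem_iff (hP : IsPregroupStructure P) {z b : G} (hb : b ∈ BP P) :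
    z * b ∈ P ↔ z ∈ P :=
  ⟨fun h => by simpa using (((bpSubgroup hP).inv_mem hb).2 _ h).1, fun h => (hb.2 z h).1⟩

theorem bp_mul_mem_iff (hP : IsPregroupStructure P) {z b : G} (hb : b ∈ BP P) :
    b * z ∈ P ↔ z ∈ P :=
  ⟨fun h => by simpa using (((bpSubgroup hP).inv_mem hb).2 _ h).2, fun h => (hb.2 z h).2⟩

theorem inv_mul_mem_comm (hP : IsPregroupStructure P) {x y : G} :
    x⁻¹ * y ∈ P ↔ y⁻¹ * x ∈ P :=
  ⟨fun h => by simpa using hP.inv_mem _ h, fun h => by simpa using hP.inv_mem _ h⟩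

theorem inv_mul_mem_congr_right (hP : IsPregroupStructure P) (x : G) {y y' : G}
    (h : (y : G ⧸ bpSubgroup hP) = y') : x⁻¹ * y ∈ P ↔ x⁻¹ * y' ∈ P := by
  rw [← mul_bp_mem_iff hP (QuotientGroup.eq.1 h), mul_assoc, mul_inv_cancel_left]

theorem mul_mem_bp_of_left (hP : IsPregroupStructure P) (hP6 : AxiomP6 P) {x p q : G} (hx : x ∈ P)
    (hp : p ∈ P) (hq : q ∈ P) (hxp : x * p ∉ P) (hpq : p * q ∈ P) (h : x * (p * q) ∈ P) :
    p * q ∈ BP P :=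
  hP6 x hx p hp hxp (p * q) hpq h (by simpa using hP.inv_mem q hq)

theorem mul_mem_bp_of_right (hP : IsPregroupStructure P) (hP6 : AxiomP6 P) {p q y : G} (hp : p ∈ P)
    (hq : q ∈ P) (hy : y ∈ P) (hqy : q * y ∉ P) (hpq : p * q ∈ P) (h : p * q * y ∈ P) :
    p * q ∈ BP P := by
  have hinv : (p * q)⁻¹ ∈ bpSubgroup hP :=
    hP6 q hq y hy hqy _ (hP.inv_mem _ hpq) (by simpa using hP.inv_mem p hp) (by simpa using h)
  exact (bpSubgroup hP).inv_mem_iff.1 hinv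

end BaseSubgroup

section ReducedWord

variable {G : Type*} [Group G] {P : Set G} {p q b : G} {u v : List G}

/-- A reduced `P`-product that is allowed to be empty, so that subwords of reduced words are
reduced. -/
def IsReducedWord (P : Set G) (u : List G) : Prop :=
  (∀ x ∈ u, x ∈ P) ∧ u.IsChain fun a b => a * b ∉ P

theorem isReducedProd_iff : IsReducedProd P u ↔ u ≠ [] ∧ IsReducedWord P u := by
  rw [IsReducedProd, IsReducedWord, List.isChain_iff_getElem]

theorem isReducedWord_cons :
    IsReducedWord P (p :: u) ↔ p ∈ P ∧ (∀ q ∈ u.head?, p * q ∉ P) ∧ IsReducedWord P u := by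
  simp only [IsReducedWord, List.forall_mem_cons, List.isChain_cons]
  tauto

theorem isReducedWord_concat :
    IsReducedWord P (u ++ [p]) ↔ IsReducedWord P u ∧ (∀ q ∈ u.getLast?, q * p ∉ P) ∧ p ∈ P := by
  simp only [IsReducedWord, List.forall_mem_append, List.forall_mem_singleton,
    List.isChain_append, List.isChain_singleton, List.head?_cons, Option.mem_some_iff,
    forall_eq']
  tauto

theorem isReducedWord_append_cons :
    IsReducedWord P (u ++ p :: v) ↔ IsReducedWord P (u ++ [p]) ∧ IsReducedWord P (p :: v) := by
  simp only [IsReducedWord, List.forall_mem_append, List.forall_mem_cons,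
    List.isChain_split (l₁ := u) (l₂ := v)]
  simp only [List.not_mem_nil, IsEmpty.forall_iff, implies_true]
  tauto

theorem isReducedWord_concat_mul_bp_iff (hP : IsPregroupStructure P) (hb : b ∈ BP P) :
    IsReducedWord P (u ++ [p * b]) ↔ IsReducedWord P (u ++ [p]) := by
  simp only [isReducedWord_concat, ← mul_assoc, mul_bp_mem_iff hP hb]

theorem isReducedWord_bp_mul_cons_iff (hP : IsPregroupStructure P) (hb : b ∈ BP P) :
    IsReducedWord P (b * p :: u) ↔ IsReducedWord P (p :: u) := by
  simp only [isReducedWord_cons, mul_assoc, bp_mul_mem_iff hP hb]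

theorem IsReducedWord.append_mul_cons (hP : IsPregroupStructure P) (hP6 : AxiomP6 P)
    (hu : IsReducedWord P (u ++ [p])) (hv : IsReducedWord P (q :: v)) (hpq : p * q ∈ P)
    (hpqB : p * q ∉ BP P) : IsReducedWord P (u ++ p * q :: v) := by
  obtain ⟨hu, hup, hp⟩ := isReducedWord_concat.1 hu
  obtain ⟨hq, hqv, hv⟩ := isReducedWord_cons.1 hv
  refine isReducedWord_append_cons.2 ⟨isReducedWord_concat.2 ⟨hu, fun x hx hxpq => hpqB ?_, hpq⟩,
    isReducedWord_cons.2 ⟨hpq, fun y hy hpqy => hpqB ?_, hv⟩⟩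
  · exact mul_mem_bp_of_left hP hP6 (hu.1 x (List.mem_of_mem_getLast? hx)) hp hq (hup x hx) hpq hxpq
  · exact mul_mem_bp_of_right hP hP6 hp hq (hv.1 y (List.mem_of_mem_head? hy)) (hqv y hy) hpq hpqy

/-- The formal inverse of a word: the inverted letters in reverse order. -/
def invWord (u : List G) : List G :=
  (u.map (·⁻¹)).reverse

theorem prod_invWord (u : List G) : (invWord u).prod = u.prod⁻¹ :=
  u.prod_inv_reverse.symm

theorem invWord_cons (p : G) (u : List G) : invWord (p :: u) = invWord u ++ [p⁻¹] := by
  simp [invWord]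

theorem isReducedProd_invWord (hP : IsPregroupStructure P) (hu : IsReducedProd P u) :
    IsReducedProd P (invWord u) := by
  obtain ⟨hne, hmem, hchain⟩ := isReducedProd_iff.1 hu
  refine isReducedProd_iff.2 ⟨by simpa [invWord] using hne, ?_, ?_⟩
  · simpa [invWord] using fun x hx => by simpa using hP.inv_mem _ (hmem _ hx)
  · rw [invWord, List.isChain_reverse, List.isChain_map]
    exact hchain.imp fun x y hxy hyx => hxy (by simpa using hP.inv_mem _ hyx)

end ReducedWord

section Edges

variable {G : Type*} [Group G] {P : Set G}

/-- The pairs of consecutive vertices `(x u(i), x u(i+1))` of the path defined by the word `u` based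
at `x`. -/
def edges (x : G) : List G → Set (G × G)
  | [] => ∅
  | p :: u => insert (x, x * p) (edges (x * p) u)

theorem edges_append (x : G) (u v : List G) :
    edges x (u ++ v) = edges x u ∪ edges (x * u.prod) v := by
  induction u generalizing x with
  | nil => simp [edges]
  | cons p u ih => simp [edges, ih, insert_union, mul_assoc]

theorem mem_edges {x : G} {u : List G} {e : G × G} :
    e ∈ edges x u ↔ ∃ i < u.length, (x * (u.take i).prod, x * (u.take (i + 1)).prod) = e := by
  induction u generalizing x with
  | nil => simp [edges]
  | cons p u ih =>
    simp only [edges, mem_insert_iff, ih, List.length_cons, Nat.exists_lt_succ_left]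
    simp [mul_assoc, eq_comm]

theorem inv_mul_mem_of_mem_edges {x a b : G} {u : List G} (hu : ∀ p ∈ u, p ∈ P)
    (h : (a, b) ∈ edges x u) : a⁻¹ * b ∈ P := by
  induction u generalizing x with
  | nil => exact h.elim
  | cons p u ih =>
    obtain ⟨hp, hu⟩ := List.forall_mem_cons.1 hu
    rcases h with h | h
    · obtain ⟨rfl, rfl⟩ := Prod.mk.inj h
      rwa [inv_mul_cancel_left]
    · exact ih hu h

theorem edges_invWord (x : G) (u : List G) :
    edges (x * u.prod) (invWord u) = Prod.swap ⁻¹' edges x u := by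
  induction u generalizing x with
  | nil => simp [edges, invWord]
  | cons p u ih =>
    ext ⟨a, b⟩
    simp [invWord_cons, edges_append, ← mul_assoc, ih, prod_invWord, edges, and_comm]

/-- The edges of the path defined by `u` based at `x`, seen through the left cosets of `B_P`. -/
def cosetEdges (hP : IsPregroupStructure P) (x : G) (u : List G) :
    Set ((G ⧸ bpSubgroup hP) × (G ⧸ bpSubgroup hP)) :=
  Prod.map (↑) (↑) '' edges x u

variable (hP : IsPregroupStructure P) (x : G) {p q b : G} (u v : List G)

theorem mem_cosetEdges {hP : IsPregroupStructure P} {x : G} {u : List G}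
    {α β : G ⧸ bpSubgroup hP} :
    (α, β) ∈ cosetEdges hP x u ↔ ∃ a b : G, (a, b) ∈ edges x u ∧ ↑a = α ∧ ↑b = β := by
  simp [cosetEdges]

theorem cosetEdges_nil : cosetEdges hP x [] = ∅ := by
  simp [cosetEdges, edges]

theorem cosetEdges_cons :
    cosetEdges hP x (p :: u) = insert (↑x, ↑(x * p)) (cosetEdges hP (x * p) u) := by
  simp [cosetEdges, edges, image_insert_eq]

theorem cosetEdges_append :
    cosetEdges hP x (u ++ v) = cosetEdges hP x u ∪ cosetEdges hP (x * u.prod) v := by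
  simp only [cosetEdges, edges_append, image_union]

theorem cosetEdges_bp_mul_cons (hb : b ∈ BP P) :
    cosetEdges hP x (b * p :: u) = cosetEdges hP (x * b) (p :: u) := by
  rw [cosetEdges_cons, cosetEdges_cons, mul_assoc,
    QuotientGroup.mk_mul_of_mem x (mem_bpSubgroup.2 hb)]

theorem cosetEdges_concat_mul_bp (hb : b ∈ BP P) :
    cosetEdges hP x (u ++ [p * b]) = cosetEdges hP x (u ++ [p]) := by
  simp only [cosetEdges_append, cosetEdges_cons, cosetEdges_nil, ← mul_assoc,
    QuotientGroup.mk_mul_of_mem _ (mem_bpSubgroup.2 hb)]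

end Edges

section Uniqueness

variable {G : Type*} [Group G] {P : Set G} {u v : List G} {p q r : G}

theorem length_eq_of_prod_eq (hP : IsPregroupStructure P) (hu : IsReducedWord P (p :: u))
    (hv : IsReducedWord P (q :: v)) (h : (p :: u).prod = (q :: v).prod) : u.length = v.length := by
  have hlen := (hP.uniq _ _ (isReducedProd_iff.2 ⟨List.cons_ne_nil p u, hu⟩)
    (isReducedProd_iff.2 ⟨List.cons_ne_nil q v, hv⟩) h).1
  simpa using hlen

theorem inv_mul_mem_of_prod_eq (hP : IsPregroupStructure P) (hu : IsReducedWord P (p :: r :: u))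
    (hv : IsReducedWord P (q :: v)) (h : (p :: r :: u).prod = (q :: v).prod) : p⁻¹ * q ∈ P := by
  obtain ⟨-, a, ha₀, -, haP, ha⟩ := hP.uniq _ _
    (isReducedProd_iff.2 ⟨List.cons_ne_nil p (r :: u), hu⟩)
    (isReducedProd_iff.2 ⟨List.cons_ne_nil q v, hv⟩) h
  have hq : q = (a 0)⁻¹ * p * a 1 := (ha 0 (by simp) (by simp)).2
  simpa [hq, ha₀] using haP 1 one_pos (by simp)

theorem inv_mul_mem_bp_of_prod_eq (hP : IsPregroupStructure P) (hP6 : AxiomP6 P) {s : G}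
    (hu : IsReducedWord P (p :: r :: u)) (hv : IsReducedWord P (q :: s :: v))
    (h : (p :: r :: u).prod = (q :: s :: v).prod) : p⁻¹ * q ∈ BP P := by
  obtain ⟨hp, hpr, hru⟩ := isReducedWord_cons.1 hu
  obtain ⟨hq, -, hsv⟩ := isReducedWord_cons.1 hv
  have hpq : p⁻¹ * q ∈ P := inv_mul_mem_of_prod_eq hP hu hv h
  refine hP6 p hp r (isReducedWord_cons.1 hru).1 (by simpa using hpr) _ hpq (by simpa using hq) ?_
  -- Otherwise `((p⁻¹q)⁻¹, r, u)` would be a reduced product for `(s, v)` with one more letter.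
  by_contra hqpr
  have hlonger : IsReducedWord P ((p⁻¹ * q)⁻¹ :: r :: u) :=
    isReducedWord_cons.2 ⟨hP.inv_mem _ hpq, by simpa using hqpr, hru⟩
  have hprod : ((p⁻¹ * q)⁻¹ :: r :: u).prod = (s :: v).prod := by
    simpa [mul_assoc, inv_mul_eq_iff_eq_mul] using h
  have hlen := length_eq_of_prod_eq hP hlonger hsv hprod
  have hlen' := length_eq_of_prod_eq hP hu hv h
  simp only [List.length_cons] at hlen hlen'
  omega

theorem cosetEdges_eq_of_prod_eq (hP : IsPregroupStructure P) (hP6 : AxiomP6 P) (x : G)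
    (hu : IsReducedProd P u) (hv : IsReducedProd P v) (h : u.prod = v.prod) :
    cosetEdges hP x u = cosetEdges hP x v := by
  rw [isReducedProd_iff] at hu hv
  obtain ⟨p, u, rfl⟩ := List.exists_cons_of_ne_nil hu.1
  obtain ⟨q, v, rfl⟩ := List.exists_cons_of_ne_nil hv.1
  replace hu := hu.2
  replace hv := hv.2
  induction u generalizing x p q v with
  | nil =>
    obtain rfl : v = [] := List.length_eq_zero_iff.1 (length_eq_of_prod_eq hP hu hv h).symm
    simp_all
  | cons r u ih =>
    obtain ⟨s, v, rfl⟩ : ∃ s v', v = s :: v' :=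
      List.exists_cons_of_length_eq_add_one (length_eq_of_prod_eq hP hu hv h).symm
    have hb : p⁻¹ * q ∈ BP P := inv_mul_mem_bp_of_prod_eq hP hP6 hu hv h
    have htail : cosetEdges hP (x * p) (r :: u) = cosetEdges hP (x * p) (p⁻¹ * q * s :: v) := by
      refine ih _ _ _ _ ?_ (isReducedWord_cons.1 hu).2.2
        ((isReducedWord_bp_mul_cons_iff hP hb).2 (isReducedWord_cons.1 hv).2.2)
      simpa [mul_assoc, eq_inv_mul_iff_mul_eq] using h
    have hcoset : (↑(x * p) : G ⧸ bpSubgroup hP) = ↑(x * q) :=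
      QuotientGroup.eq.2 (by simpa [mul_assoc, mem_bpSubgroup] using hb)
    rw [cosetEdges_cons, htail, cosetEdges_bp_mul_cons hP _ _ hb, cosetEdges_cons hP x (p := q),
      hcoset, mul_assoc, mul_inv_cancel_left]

end Uniqueness

section Tripod

/-- For sets of oriented edges `U`, `V`, `W` of a triangle whose sides run from the first corner to
the second, from the second to the third and from the first to the third: every edge of `U` is an
edge of `W`, or a reversed edge of `V`, or closes up to a triangle with an edge of `V` and an edge
of `W`. -/
def IsTripod {Q : Type*} (U V W : Set (Q × Q)) : Prop :=
  ∀ α β, (α, β) ∈ U → (α, β) ∈ W ∨ (β, α) ∈ V ∨ ∃ γ, (α, γ) ∈ W ∧ (β, γ) ∈ V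

namespace IsTripod

variable {Q : Type*} {U V W : Set (Q × Q)} {α β γ : Q}

theorem of_subset (h : U ⊆ W) : IsTripod U V W :=
  fun _ _ hU => Or.inl (h hU)

theorem cancel (h : IsTripod U V W) : IsTripod (insert (α, β) U) (insert (β, α) V) W := by
  rintro α' β' (hαβ | hU)
  · obtain ⟨rfl, rfl⟩ := Prod.mk.inj hαβ
    exact Or.inr (Or.inl (mem_insert _ _))
  · rcases h α' β' hU with hW | hV | ⟨γ, hW, hV⟩
    · exact Or.inl hW
    · exact Or.inr (Or.inl (mem_insert_of_mem _ hV))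
    · exact Or.inr (Or.inr ⟨γ, hW, mem_insert_of_mem _ hV⟩)

theorem merge (h : U ⊆ W) (hαγ : (α, γ) ∈ W) : IsTripod (insert (α, β) U) (insert (β, γ) V) W := by
  rintro α' β' (hαβ | hU)
  · obtain ⟨rfl, rfl⟩ := Prod.mk.inj hαβ
    exact Or.inr (Or.inr ⟨γ, hαγ, mem_insert _ _⟩)
  · exact Or.inl (h hU)

end IsTripod

variable {G : Type*} [Group G] {P : Set G} {u v w : List G} {p q b : G}

theorem cosetEdges_concat (hP : IsPregroupStructure P) (x : G) (u : List G) (p : G) :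
    cosetEdges hP x (u ++ [p]) =
      insert (↑(x * u.prod), ↑(x * (u ++ [p]).prod)) (cosetEdges hP x u) := by
  rw [cosetEdges_append, cosetEdges_cons, cosetEdges_nil, insert_empty_eq, union_singleton,
    List.prod_append, List.prod_singleton, mul_assoc]

theorem isTripod_cosetEdges_cancel (hP : IsPregroupStructure P) (x : G) (hpq : p * q ∈ BP P)
    {W : Set ((G ⧸ bpSubgroup hP) × (G ⧸ bpSubgroup hP))}
    (h : IsTripod (cosetEdges hP x u) (cosetEdges hP (x * u.prod * (p * q)) v) W) :
    IsTripod (cosetEdges hP x (u ++ [p])) (cosetEdges hP (x * (u ++ [p]).prod) (q :: v)) W := by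
  have hback : (↑(x * (u ++ [p]).prod * q) : G ⧸ bpSubgroup hP) = ↑(x * u.prod) :=
    (QuotientGroup.eq.2 (by simpa [mul_assoc, mem_bpSubgroup] using hpq)).symm
  rw [cosetEdges_concat, cosetEdges_cons, hback]
  simpa [mul_assoc] using h.cancel

theorem isTripod_cosetEdges_merge (hP : IsPregroupStructure P) (x : G) (u v : List G) (p q : G) :
    IsTripod (cosetEdges hP x (u ++ [p])) (cosetEdges hP (x * (u ++ [p]).prod) (q :: v))
      (cosetEdges hP x (u ++ p * q :: v)) := by
  rw [cosetEdges_concat, cosetEdges_cons, cosetEdges_append, cosetEdges_cons]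
  exact .merge subset_union_left (Or.inr (Or.inl (by simp [mul_assoc])))

theorem isTripod_cosetEdges_append (hP : IsPregroupStructure P) (x : G) (u v : List G)
    (V : Set ((G ⧸ bpSubgroup hP) × (G ⧸ bpSubgroup hP))) :
    IsTripod (cosetEdges hP x u) V (cosetEdges hP x (u ++ v)) :=
  .of_subset (by simp [cosetEdges_append])

-- The product `u b v` is reduced by working outwards from `b`: while the letters `p`, `q` next to
-- `b` satisfy `p b q ∈ B_P` they cancel and `p b q` takes the place of `b`.
theorem exists_isTripod (hP : IsPregroupStructure P) (hP6 : AxiomP6 P) (x : G) (hb : b ∈ BP P)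
    (hu : IsReducedWord P u) (hv : IsReducedWord P v) :
    ∃ w, IsReducedProd P w ∧ w.prod = u.prod * b * v.prod ∧
      IsTripod (cosetEdges hP x u) (cosetEdges hP (x * u.prod * b) v) (cosetEdges hP x w) := by
  induction u using List.reverseRecOn generalizing b v with
  | nil =>
    simp only [isReducedProd_iff, cosetEdges_nil, List.prod_nil, one_mul]
    cases v with
    | nil => exact ⟨[b], ⟨by simp, isReducedWord_cons.2 ⟨hb.1, by simp, hv⟩⟩, by simp,
        .of_subset (empty_subset _)⟩
    | cons q v => exact ⟨b * q :: v, ⟨by simp, (isReducedWord_bp_mul_cons_iff hP hb).2 hv⟩,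
        by simp [mul_assoc], .of_subset (empty_subset _)⟩
  | append_singleton u p ih =>
    have hprod : (u ++ [p]).prod * b = (u ++ [p * b]).prod := by simp [mul_assoc]
    rw [← isReducedWord_concat_mul_bp_iff hP hb] at hu
    rw [mul_assoc x, hprod, ← cosetEdges_concat_mul_bp hP x u hb]
    generalize p * b = p at hu
    obtain ⟨huRed, -, hp⟩ := isReducedWord_concat.1 hu
    cases v with
    | nil => exact ⟨u ++ [p], isReducedProd_iff.2 ⟨by simp, hu⟩, by simp, .of_subset subset_rfl⟩
    | cons q v =>
      by_cases hpqB : p * q ∈ BP P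
      · obtain ⟨w, hw, hwprod, htri⟩ := ih hpqB huRed (isReducedWord_cons.1 hv).2.2
        exact ⟨w, hw, by simp [hwprod, mul_assoc], isTripod_cosetEdges_cancel hP x hpqB htri⟩
      by_cases hpq : p * q ∈ P
      · exact ⟨u ++ p * q :: v,
          isReducedProd_iff.2 ⟨by simp, hu.append_mul_cons hP hP6 hv hpq hpqB⟩,
          by simp [mul_assoc], isTripod_cosetEdges_merge hP x u v p q⟩
      · have hpqv : IsReducedWord P (p :: q :: v) :=
          isReducedWord_cons.2 ⟨hp, by simpa using hpq, hv⟩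
        rw [← List.prod_append]
        exact ⟨u ++ [p] ++ q :: v,
          isReducedProd_iff.2 ⟨by simp, by simpa using isReducedWord_append_cons.2 ⟨hu, hpqv⟩⟩,
          rfl, isTripod_cosetEdges_append hP x _ _ _⟩

theorem isTripod_cosetEdges (hP : IsPregroupStructure P) (hP6 : AxiomP6 P) (x : G)
    (hu : IsReducedProd P u) (hv : IsReducedProd P v) (hw : IsReducedProd P w)
    (h : u.prod * v.prod = w.prod) :
    IsTripod (cosetEdges hP x u) (cosetEdges hP (x * u.prod) v) (cosetEdges hP x w) := by
  obtain ⟨w', hw', hprod, htri⟩ := exists_isTripod hP hP6 x (bpSubgroup hP).one_mem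
    (isReducedProd_iff.1 hu).2 (isReducedProd_iff.1 hv).2
  rw [mul_one] at hprod htri
  rwa [cosetEdges_eq_of_prod_eq hP hP6 x hw hw' (h.symm.trans hprod.symm)]

end Tripod

section Geodesic

variable {X : Type*} [MetricSpace X] {f : ℝ → X} {s : Set X} {x y z : X}

theorem IsGeodesicParam.dist_left (hf : IsGeodesicParam f x y) {a : ℝ} (ha : a ∈ Icc 0 (dist x y)) :
    dist x (f a) = a := by
  rw [← hf.1, hf.2.2 0 (left_mem_Icc.2 dist_nonneg) a ha, zero_sub, abs_neg, abs_of_nonneg ha.1]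

theorem IsGeodesicParam.dist_right (hf : IsGeodesicParam f x y) {a : ℝ}
    (ha : a ∈ Icc 0 (dist x y)) : dist (f a) y = dist x y - a := by
  conv_lhs => rw [← hf.2.1]
  rw [hf.2.2 a ha _ (right_mem_Icc.2 dist_nonneg), abs_sub_comm, abs_of_nonneg (sub_nonneg.2 ha.2)]

theorem isGeodesicParam_of_dist_le (hx : f 0 = x) (hy : f (dist x y) = y)
    (hle : ∀ a b, 0 ≤ a → a ≤ b → b ≤ dist x y → dist (f a) (f b) ≤ b - a) :
    IsGeodesicParam f x y := by
  have key : ∀ a b, 0 ≤ a → a ≤ b → b ≤ dist x y → dist (f a) (f b) = b - a := by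
    intro a b ha hab hb
    refine (hle a b ha hab hb).antisymm ?_
    have hxa : dist x (f a) ≤ a - 0 := hx ▸ hle 0 a le_rfl ha (hab.trans hb)
    have hby : dist (f b) y ≤ dist x y - b := by
      simpa only [hy] using hle b (dist x y) (ha.trans hab) hb le_rfl
    linarith [dist_triangle4 x (f a) (f b) y]
  refine ⟨hx, hy, fun a ha b hb => ?_⟩
  rcases le_total a b with hab | hab
  · rw [key a b ha.1 hab hb.2, abs_sub_comm, abs_of_nonneg (sub_nonneg.2 hab)]
  · rw [dist_comm, key b a hb.1 hab ha.2, abs_of_nonneg (sub_nonneg.2 hab)]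

theorem IsGeodesicSpace.exists_isGeodesicSegment_through (hX : IsGeodesicSpace X)
    (h : dist x z + dist z y = dist x y) : ∃ s, IsGeodesicSegment s x y ∧ z ∈ s := by
  obtain ⟨_, f, hf, -⟩ := hX x z
  obtain ⟨_, g, hg, -⟩ := hX z y
  have hz₀ : 0 ≤ dist x z := dist_nonneg
  have hz₁ : 0 ≤ dist z y := dist_nonneg
  let F : ℝ → X := fun t => if t ≤ dist x z then f t else g (t - dist x z)
  have hFf : ∀ t ≤ dist x z, F t = f t := fun t ht => if_pos ht
  have hFg : ∀ t, dist x z ≤ t → F t = g (t - dist x z) := by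
    intro t ht
    rcases ht.eq_or_lt with rfl | ht
    · rw [hFf _ le_rfl, hf.2.1, sub_self, hg.1]
    · exact if_neg ht.not_ge
  refine ⟨_, ⟨F, isGeodesicParam_of_dist_le ?_ ?_ ?_, rfl⟩, dist x z, ⟨hz₀, by linarith⟩, ?_⟩
  · rw [hFf 0 hz₀, hf.1]
  · rw [hFg _ (by linarith), ← h, add_sub_cancel_left, hg.2.1]
  · intro a b ha hab hb
    rcases le_total b (dist x z) with hbz | hbz
    · rw [hFf a (hab.trans hbz), hFf b hbz, hf.2.2 a ⟨ha, hab.trans hbz⟩ b ⟨ha.trans hab, hbz⟩,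
        abs_sub_comm, abs_of_nonneg (sub_nonneg.2 hab)]
    rcases le_total a (dist x z) with haz | haz
    · rw [hFf a haz, hFg b hbz]
      have hleft := hf.dist_right ⟨ha, haz⟩
      have hright := hg.dist_left (a := b - dist x z) ⟨by linarith, by linarith⟩
      linarith [dist_triangle (f a) z (g (b - dist x z))]
    · rw [hFg a haz, hFg b hbz, hg.2.2 _ ⟨by linarith, by linarith⟩ _ ⟨by linarith, by linarith⟩,
        sub_sub_sub_cancel_right, abs_sub_comm, abs_of_nonneg (sub_nonneg.2 hab)]
  · rw [hFf _ le_rfl, hf.2.1]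

theorem IsGeodesicSegment.right_mem (hs : IsGeodesicSegment s x y) : y ∈ s := by
  obtain ⟨f, hf, rfl⟩ := hs
  exact ⟨dist x y, right_mem_Icc.2 dist_nonneg, hf.2.1⟩

theorem IsGeodesicSegment.eq_singleton (hs : IsGeodesicSegment s x x) : s = {x} := by
  obtain ⟨f, hf, rfl⟩ := hs
  rw [dist_self, Icc_self, image_singleton, hf.1]

theorem IsGeodesicSegment.dist_eq {z' : X} (hs : IsGeodesicSegment s x y) (hz : z ∈ s)
    (hz' : z' ∈ s) : dist z z' = |dist x z - dist x z'| := by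
  obtain ⟨f, hf, rfl⟩ := hs
  obtain ⟨a, ha, rfl⟩ := hz
  obtain ⟨b, hb, rfl⟩ := hz'
  rw [hf.dist_left ha, hf.dist_left hb, hf.2.2 a ha b hb]

theorem exists_dist_le_add_one_of_mem_cthickening {C : ℝ} (hC : 0 ≤ C) (hz : z ∈ cthickening C s) :
    ∃ z' ∈ s, dist z z' ≤ C + 1 := by
  have hz' := cthickening_subset_thickening' (by linarith) (lt_add_one C) s hz
  obtain ⟨z', hz's, hd⟩ := mem_thickening_iff.1 hz'
  exact ⟨z', hz's, hd.le⟩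

end Geodesic

section VertexInterval

variable {G : Type*} {X : Type*} [MetricSpace X] {ι : G → X}

/-- The vertices of the Cayley graph lying on some geodesic from `x` to `y`. Left translation acts
on these sets, whereas it need not act on `X`. -/
def vertexInterval (ι : G → X) (x y : G) : Set G :=
  {g | dist (ι x) (ι g) + dist (ι g) (ι y) = dist (ι x) (ι y)}

theorem vertexInterval_comm (ι : G → X) (x y : G) :
    vertexInterval ι x y = vertexInterval ι y x := by
  ext g
  simp only [vertexInterval, mem_ofPred_eq, dist_comm (ι y), dist_comm (ι x) (ι g), add_comm]

theorem right_mem_vertexInterval (ι : G → X) (x y : G) : y ∈ vertexInterval ι x y := by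
  simp [vertexInterval]

theorem dist_right_le_of_mem_vertexInterval {x y g : G} (hg : g ∈ vertexInterval ι x y) :
    dist (ι g) (ι y) ≤ dist (ι x) (ι y) :=
  hg ▸ le_add_of_nonneg_left dist_nonneg

variable [Group G] {S : Set G}

theorem IsCayleyGraph.dist_mul_left (hX : IsCayleyGraph S ι) (k g h : G) :
    dist (ι (k * g)) (ι (k * h)) = dist (ι g) (ι h) := by
  rw [hX.dist_eq, hX.dist_eq, mul_inv_rev, mul_assoc, inv_mul_cancel_left]

theorem IsCayleyGraph.mul_left_mem_vertexInterval (hX : IsCayleyGraph S ι) (k : G) {x y g : G} :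
    k * g ∈ vertexInterval ι (k * x) (k * y) ↔ g ∈ vertexInterval ι x y := by
  simp only [vertexInterval, mem_ofPred_eq, hX.dist_mul_left]

theorem intCast_eq_of_abs_sub_lt_one {m n : ℤ} (h : |(m : ℝ) - n| < 1) : m = n :=
  sub_eq_zero.1 (Int.abs_lt_one_iff.1 (by exact_mod_cast h))

theorem IsCayleyGraph.dist_eq_natCast (hX : IsCayleyGraph S ι) {g h : G} {n : ℕ}
    (hn : |dist (ι g) (ι h) - n| < 1) : dist (ι g) (ι h) = n := by
  rw [hX.dist_eq] at hn ⊢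
  exact_mod_cast intCast_eq_of_abs_sub_lt_one (m := wordLength S (g⁻¹ * h)) (n := n)
    (by exact_mod_cast hn)

-- The vertex `g` nearest to `f i` has integral distances to both endpoints, each within `1/2` of
-- that of `f i`, hence equal to it.
theorem IsCayleyGraph.exists_mem_vertexInterval_of_natCast (hX : IsCayleyGraph S ι) {x y : G}
    {f : ℝ → X} (hf : IsGeodesicParam f (ι x) (ι y)) {i : ℕ} (hi : (i : ℝ) ≤ dist (ι x) (ι y)) :
    ∃ g ∈ vertexInterval ι x y, dist (ι x) (ι g) = i ∧ dist (f i) (ι g) ≤ 1 / 2 := by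
  obtain ⟨g, hg⟩ := hX.dense (f i)
  obtain ⟨d, hd⟩ : ∃ d : ℕ, dist (ι x) (ι y) = d := ⟨_, hX.dist_eq x y⟩
  have hid : i ≤ d := by rw [hd] at hi; exact_mod_cast hi
  have hxf := hf.dist_left ⟨i.cast_nonneg, hi⟩
  have hfy := hf.dist_right ⟨i.cast_nonneg, hi⟩
  have hxg : dist (ι x) (ι g) = i := hX.dist_eq_natCast <| by
    rw [abs_lt]
    constructor <;>
      linarith [dist_triangle (ι x) (f i) (ι g), dist_triangle_right (ι x) (f i) (ι g)]
  have hgy : dist (ι g) (ι y) = (d - i : ℕ) := hX.dist_eq_natCast <| by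
    rw [Nat.cast_sub hid, abs_lt]
    constructor <;>
      linarith [dist_triangle_left (ι g) (ι y) (f i), dist_triangle (f i) (ι g) (ι y)]
  refine ⟨g, ?_, hxg, hg⟩
  rw [vertexInterval, mem_ofPred_eq, hxg, hgy, hd, Nat.cast_sub hid, add_sub_cancel]

theorem IsCayleyGraph.exists_mem_vertexInterval_dist_le (hX : IsCayleyGraph S ι) {x y : G}
    {s : Set X} (hs : IsGeodesicSegment s (ι x) (ι y)) {z : X} (hz : z ∈ s) :
    ∃ g ∈ vertexInterval ι x y, dist z (ι g) ≤ 3 / 2 := by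
  obtain ⟨f, hf, rfl⟩ := hs
  obtain ⟨a, ha, rfl⟩ := hz
  have hfloor := Nat.floor_le ha.1
  have hceil := Nat.lt_floor_add_one a
  obtain ⟨g, hg, -, hfg⟩ := hX.exists_mem_vertexInterval_of_natCast hf (hfloor.trans ha.2)
  have hstep : dist (f a) (f ⌊a⌋₊) ≤ 1 := by
    rw [hf.2.2 a ha _ ⟨Nat.cast_nonneg _, hfloor.trans ha.2⟩, abs_of_nonneg (sub_nonneg.2 hfloor)]
    linarith
  exact ⟨g, hg, by linarith [dist_triangle (f a) (f ⌊a⌋₊) (ι g)]⟩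

end VertexInterval

section Thinness

variable {G : Type*} [Group G] {X : Type*} [MetricSpace X] {S : Set G} {ι : G → X} {P : Set G}
  {C₁ : ℝ} {x y w g h : G}

theorem IsCayleyGraph.dist_le_of_mem_vertexInterval (hX : IsCayleyGraph S ι) (hC₁ : 0 ≤ C₁)
    (hH1 : AxiomH1 P ι C₁) (hone : (1 : G) ∈ P) (hxy : x⁻¹ * y ∈ P) (hg : g ∈ vertexInterval ι x y)
    (hh : h ∈ vertexInterval ι x y) (hgh : dist (ι x) (ι g) = dist (ι x) (ι h)) :
    dist (ι g) (ι h) ≤ 2 * (C₁ + 1) := by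
  rw [← hX.mul_left_mem_vertexInterval x⁻¹, inv_mul_cancel] at hg hh
  rw [← hX.dist_mul_left x⁻¹ x g, ← hX.dist_mul_left x⁻¹ x h, inv_mul_cancel] at hgh
  rw [← hX.dist_mul_left x⁻¹]
  generalize x⁻¹ * y = p, x⁻¹ * g = g, x⁻¹ * h = h at *
  obtain ⟨s, hs, hgs⟩ := hX.geodesic.exists_isGeodesicSegment_through hg
  obtain ⟨t, ht, hht⟩ := hX.geodesic.exists_isGeodesicSegment_through hh
  obtain ⟨r, hr⟩ := hX.geodesic (ι p) (ι p)
  obtain ⟨z, hz, hgz⟩ : ∃ z ∈ t, dist (ι g) z ≤ C₁ + 1 := by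
    have hthin := hH1 p hxy 1 hone s r t hs (by rwa [mul_one]) (by rwa [mul_one])
    have hrt : r ∪ t = t := by
      rw [hr.eq_singleton, singleton_union, insert_eq_of_mem ht.right_mem]
    exact exists_dist_le_add_one_of_mem_cthickening hC₁ (hrt ▸ hthin.1 hgs)
  have hzh : dist z (ι h) ≤ dist (ι g) z := by
    rw [ht.dist_eq hz hht, ← hgh, abs_sub_comm]
    simpa only [dist_comm (ι 1)] using abs_dist_sub_le (ι g) z (ι 1)
  linarith [dist_triangle (ι g) z (ι h)]

theorem IsCayleyGraph.exists_mem_segment_dist_le (hX : IsCayleyGraph S ι) (hC₁ : 0 ≤ C₁)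
    (hH1 : AxiomH1 P ι C₁) (hone : (1 : G) ∈ P) (hxy : x⁻¹ * y ∈ P) (hg : g ∈ vertexInterval ι x y)
    {s : Set X} (hs : IsGeodesicSegment s (ι x) (ι y)) :
    ∃ z ∈ s, dist (ι g) z ≤ 2 * C₁ + 5 / 2 := by
  obtain ⟨f, hf, rfl⟩ := hs
  obtain ⟨i, hi⟩ : ∃ i : ℕ, dist (ι x) (ι g) = i := ⟨_, hX.dist_eq x g⟩
  have hile : (i : ℝ) ≤ dist (ι x) (ι y) := by
    rw [← hi, ← hg]
    exact le_add_of_nonneg_right dist_nonneg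
  obtain ⟨h, hh, hxh, hfh⟩ := hX.exists_mem_vertexInterval_of_natCast hf hile
  have hgh := hX.dist_le_of_mem_vertexInterval hC₁ hH1 hone hxy hg hh (hi.trans hxh.symm)
  refine ⟨f i, mem_image_of_mem f ⟨i.cast_nonneg, hile⟩, ?_⟩
  linarith [dist_triangle_right (ι g) (f i) (ι h)]

theorem IsCayleyGraph.exists_mem_vertexInterval_union (hX : IsCayleyGraph S ι) (hC₁ : 0 ≤ C₁)
    (hH1 : AxiomH1 P ι C₁) (hxy : x⁻¹ * y ∈ P) (hyw : y⁻¹ * w ∈ P)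
    (hg : g ∈ vertexInterval ι x y) :
    ∃ k ∈ vertexInterval ι y w ∪ vertexInterval ι x w, dist (ι g) (ι k) ≤ C₁ + 5 / 2 := by
  have hmul : x⁻¹ * y * (y⁻¹ * w) = x⁻¹ * w := by rw [mul_assoc, mul_inv_cancel_left]
  rw [← hX.mul_left_mem_vertexInterval x⁻¹, inv_mul_cancel] at hg
  obtain ⟨s, hs, hgs⟩ := hX.geodesic.exists_isGeodesicSegment_through hg
  obtain ⟨t, ht⟩ := hX.geodesic (ι (x⁻¹ * y)) (ι (x⁻¹ * w))
  obtain ⟨r, hr⟩ := hX.geodesic (ι 1) (ι (x⁻¹ * w))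
  have hthin := hH1 _ hxy _ hyw s t r hs (by rwa [hmul]) (by rwa [hmul])
  obtain ⟨z, hz, hgz⟩ := exists_dist_le_add_one_of_mem_cthickening hC₁ (hthin.1 hgs)
  obtain ⟨k, hk, hzk⟩ : ∃ k ∈ vertexInterval ι (x⁻¹ * y) (x⁻¹ * w) ∪ vertexInterval ι 1 (x⁻¹ * w),
      dist z (ι k) ≤ 3 / 2 := by
    rcases hz with hz | hz
    · exact (hX.exists_mem_vertexInterval_dist_le ht hz).imp fun k hk => ⟨Or.inl hk.1, hk.2⟩
    · exact (hX.exists_mem_vertexInterval_dist_le hr hz).imp fun k hk => ⟨Or.inr hk.1, hk.2⟩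
  refine ⟨x * k, hk.imp (fun hk => ?_) fun hk => ?_, ?_⟩
  · simpa using (hX.mul_left_mem_vertexInterval x).2 hk
  · simpa using (hX.mul_left_mem_vertexInterval x).2 hk
  · rw [← hX.dist_mul_left x⁻¹, inv_mul_cancel_left]
    linarith [dist_triangle (ι (x⁻¹ * g)) z (ι k)]

theorem IsCayleyGraph.dist_le_of_coset_eq (hX : IsCayleyGraph S ι) (hP : IsPregroupStructure P)
    {C₀ : ℝ} (hC₀ : ∀ b ∈ BP P, (wordLength S b : ℝ) ≤ C₀)
    (h : (x : G ⧸ bpSubgroup hP) = y) : dist (ι x) (ι y) ≤ C₀ := by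
  rw [hX.dist_eq]
  exact hC₀ _ (QuotientGroup.eq.1 h)

theorem IsCayleyGraph.exists_mem_vertexInterval_of_coset_eq (hX : IsCayleyGraph S ι)
    (hP : IsPregroupStructure P) {C₀ : ℝ} (hC₀ : ∀ b ∈ BP P, (wordLength S b : ℝ) ≤ C₀)
    (hC₁ : 0 ≤ C₁) (hH1 : AxiomH1 P ι C₁) {x' y' : G} (hxy : x⁻¹ * y ∈ P)
    (hx : (x : G ⧸ bpSubgroup hP) = x') (hy : (y : G ⧸ bpSubgroup hP) = y')
    (hg : g ∈ vertexInterval ι x y) :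
    ∃ k ∈ vertexInterval ι x' y', dist (ι g) (ι k) ≤ C₀ + 2 * (C₁ + 5 / 2) := by
  have hxy' : x⁻¹ * y' ∈ P := (inv_mul_mem_congr_right hP x hy).1 hxy
  have hyy' : dist (ι y) (ι y') ≤ C₀ := hX.dist_le_of_coset_eq hP hC₀ hy
  have hxx' : dist (ι x) (ι x') ≤ C₀ := hX.dist_le_of_coset_eq hP hC₀ hx
  obtain ⟨k, hk | hk, hgk⟩ :=
    hX.exists_mem_vertexInterval_union hC₁ hH1 hxy (QuotientGroup.eq.1 hy).1 hg
  · refine ⟨y', right_mem_vertexInterval ι x' y', ?_⟩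
    linarith [dist_triangle (ι g) (ι k) (ι y'), dist_right_le_of_mem_vertexInterval hk]
  rw [vertexInterval_comm] at hk
  obtain ⟨l, hl | hl, hkl⟩ := hX.exists_mem_vertexInterval_union hC₁ hH1
    ((inv_mul_mem_comm hP).1 hxy') (QuotientGroup.eq.1 hx).1 hk
  · refine ⟨x', vertexInterval_comm ι x' y' ▸ right_mem_vertexInterval ι y' x', ?_⟩
    linarith [dist_triangle4 (ι g) (ι k) (ι l) (ι x'), dist_right_le_of_mem_vertexInterval hl]
  · refine ⟨l, vertexInterval_comm ι x' y' ▸ hl, ?_⟩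
    linarith [dist_triangle (ι g) (ι k) (ι l), dist_nonneg.trans hyy']

end Thinness

section PathVertices

variable {G : Type*} [Group G] {X : Type*} [MetricSpace X] {S : Set G} {ι : G → X} {P : Set G}
  {C₀ C₁ : ℝ} {x g : G} {u v w : List G}

/-- The vertices of the Cayley graph lying on some path defined by the word `u` based at `x`. -/
def pathVertices (ι : G → X) (x : G) (u : List G) : Set G :=
  {g | ∃ a b, (a, b) ∈ edges x u ∧ g ∈ vertexInterval ι a b}

theorem pathVertices_invWord (ι : G → X) (x : G) (u : List G) :
    pathVertices ι (x * u.prod) (invWord u) = pathVertices ι x u := by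
  ext g
  simp only [pathVertices, edges_invWord, mem_preimage, Prod.swap_prod_mk, mem_ofPred_eq]
  rw [exists_comm]
  simp only [vertexInterval_comm]

theorem IsCayleyGraph.exists_mem_pathVertices_dist_le (hX : IsCayleyGraph S ι) {pa : Set X}
    (hpa : IsPathOf ι x u pa) {z : X} (hz : z ∈ pa) :
    ∃ g ∈ pathVertices ι x u, dist z (ι g) ≤ 3 / 2 := by
  obtain ⟨segs, hsegs, rfl⟩ := hpa
  obtain ⟨i, hi⟩ := mem_iUnion.1 hz
  obtain ⟨g, hg, hzg⟩ := hX.exists_mem_vertexInterval_dist_le (hsegs i) hi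
  exact ⟨g, ⟨_, _, mem_edges.2 ⟨i, i.2, rfl⟩, hg⟩, hzg⟩

theorem IsCayleyGraph.exists_mem_path_dist_le (hX : IsCayleyGraph S ι) (hC₁ : 0 ≤ C₁)
    (hH1 : AxiomH1 P ι C₁) (hone : (1 : G) ∈ P) (hu : ∀ p ∈ u, p ∈ P) {pa : Set X}
    (hpa : IsPathOf ι x u pa) (hg : g ∈ pathVertices ι x u) :
    ∃ z ∈ pa, dist (ι g) z ≤ 2 * C₁ + 5 / 2 := by
  obtain ⟨segs, hsegs, rfl⟩ := hpa
  obtain ⟨a, b, hab, hg⟩ := hg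
  have habP := inv_mul_mem_of_mem_edges hu hab
  obtain ⟨i, hi, heq⟩ := mem_edges.1 hab
  obtain ⟨rfl, rfl⟩ := Prod.mk.inj heq
  obtain ⟨z, hz, hgz⟩ := hX.exists_mem_segment_dist_le hC₁ hH1 hone habP hg (hsegs ⟨i, hi⟩)
  exact ⟨z, mem_iUnion_of_mem _ hz, hgz⟩

theorem IsCayleyGraph.exists_mem_pathVertices_of_coset_eq (hX : IsCayleyGraph S ι)
    (hP : IsPregroupStructure P) (hC₀ : ∀ b ∈ BP P, (wordLength S b : ℝ) ≤ C₀) (hC₁ : 0 ≤ C₁)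
    (hH1 : AxiomH1 P ι C₁) {a b : G} (hab : a⁻¹ * b ∈ P)
    (hedge : (↑a, ↑b) ∈ cosetEdges hP x u) (hg : g ∈ vertexInterval ι a b) :
    ∃ k ∈ pathVertices ι x u, dist (ι g) (ι k) ≤ C₀ + 2 * (C₁ + 5 / 2) := by
  obtain ⟨a', b', hedge', ha, hb⟩ := mem_cosetEdges.1 hedge
  obtain ⟨k, hk, hgk⟩ :=
    hX.exists_mem_vertexInterval_of_coset_eq hP hC₀ hC₁ hH1 hab ha.symm hb.symm hg
  exact ⟨k, ⟨a', b', hedge', hk⟩, hgk⟩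

theorem IsCayleyGraph.exists_mem_pathVertices_union (hX : IsCayleyGraph S ι)
    (hP : IsPregroupStructure P) (hP6 : AxiomP6 P)
    (hC₀ : ∀ b ∈ BP P, (wordLength S b : ℝ) ≤ C₀) (hC₁ : 0 ≤ C₁) (hH1 : AxiomH1 P ι C₁)
    (hu : IsReducedProd P u) (hv : IsReducedProd P v) (hw : IsReducedProd P w)
    (h : u.prod * v.prod = w.prod) (hg : g ∈ pathVertices ι x u) :
    ∃ k ∈ pathVertices ι (x * u.prod) v ∪ pathVertices ι x w,
      dist (ι g) (ι k) ≤ C₀ + 3 * (C₁ + 5 / 2) := by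
  obtain ⟨a, b, hab, hg⟩ := hg
  have habP := inv_mul_mem_of_mem_edges hu.2.1 hab
  rcases isTripod_cosetEdges hP hP6 x hu hv hw h a b (mem_cosetEdges.2 ⟨a, b, hab, rfl, rfl⟩) with
    hW | hV | ⟨γ, hW, hV⟩
  · obtain ⟨k, hk, hgk⟩ := hX.exists_mem_pathVertices_of_coset_eq hP hC₀ hC₁ hH1 habP hW hg
    exact ⟨k, Or.inr hk, by linarith⟩
  · rw [vertexInterval_comm] at hg
    obtain ⟨k, hk, hgk⟩ := hX.exists_mem_pathVertices_of_coset_eq hP hC₀ hC₁ hH1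
      ((inv_mul_mem_comm hP).1 habP) hV hg
    exact ⟨k, Or.inl hk, by linarith⟩
  obtain ⟨b', c, hbc, hb, rfl⟩ := mem_cosetEdges.1 hV
  have hbcP : b⁻¹ * c ∈ P := by
    rw [inv_mul_mem_comm hP, ← inv_mul_mem_congr_right hP c hb, inv_mul_mem_comm hP]
    exact inv_mul_mem_of_mem_edges hv.2.1 hbc
  obtain ⟨a', c', hac, ha, hc⟩ := mem_cosetEdges.1 hW
  have hacP : a⁻¹ * c ∈ P := by
    rw [← inv_mul_mem_congr_right hP a hc, inv_mul_mem_comm hP,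
      ← inv_mul_mem_congr_right hP c' ha, inv_mul_mem_comm hP]
    exact inv_mul_mem_of_mem_edges hw.2.1 hac
  obtain ⟨l, hl | hl, hgl⟩ := hX.exists_mem_vertexInterval_union hC₁ hH1 habP hbcP hg
  · obtain ⟨k, hk, hlk⟩ := hX.exists_mem_pathVertices_of_coset_eq hP hC₀ hC₁ hH1 hbcP hV hl
    exact ⟨k, Or.inl hk, by linarith [dist_triangle (ι g) (ι l) (ι k)]⟩
  · obtain ⟨k, hk, hlk⟩ := hX.exists_mem_pathVertices_of_coset_eq hP hC₀ hC₁ hH1 hacP hW hl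
    exact ⟨k, Or.inr hk, by linarith [dist_triangle (ι g) (ι l) (ι k)]⟩

theorem IsCayleyGraph.path_subset_cthickening_union (hX : IsCayleyGraph S ι) (hC₁ : 0 ≤ C₁)
    (hH1 : AxiomH1 P ι C₁) (hone : (1 : G) ∈ P) {y z : G} (hv : ∀ p ∈ v, p ∈ P)
    (hw : ∀ p ∈ w, p ∈ P) {pa qa ra : Set X} (hpa : IsPathOf ι x u pa) (hqa : IsPathOf ι y v qa)
    (hra : IsPathOf ι z w ra) {D : ℝ}
    (h : ∀ g ∈ pathVertices ι x u, ∃ k ∈ pathVertices ι y v ∪ pathVertices ι z w,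
      dist (ι g) (ι k) ≤ D) :
    pa ⊆ cthickening (3 / 2 + D + (2 * C₁ + 5 / 2)) (qa ∪ ra) := by
  intro t ht
  obtain ⟨g, hg, htg⟩ := hX.exists_mem_pathVertices_dist_le hpa ht
  obtain ⟨k, hk, hgk⟩ := h g hg
  obtain ⟨t', ht', hkt'⟩ : ∃ t' ∈ qa ∪ ra, dist (ι k) t' ≤ 2 * C₁ + 5 / 2 := by
    rcases hk with hk | hk
    · obtain ⟨t', ht', hkt'⟩ := hX.exists_mem_path_dist_le hC₁ hH1 hone hv hqa hk
      exact ⟨t', Or.inl ht', hkt'⟩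
    · obtain ⟨t', ht', hkt'⟩ := hX.exists_mem_path_dist_le hC₁ hH1 hone hw hra hk
      exact ⟨t', Or.inr ht', hkt'⟩
  exact mem_cthickening_of_dist_le _ t' _ _ ht'
    (by linarith [dist_triangle4 t (ι g) (ι k) t'])

end PathVertices

theorem reduced_product_triangles_thin_general {G : Type*} [Group G] {X : Type*} [MetricSpace X]
    {S : Set G} {ι : G → X} (hX : IsCayleyGraph S ι) {P : Set G} (hP : IsPregroupStructure P)
    (hP6 : AxiomP6 P) {C₀ C₁ : ℝ} (hC₀ : ∀ b ∈ BP P, (wordLength S b : ℝ) ≤ C₀) (hC₁ : 0 ≤ C₁)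
    (hH1 : AxiomH1 P ι C₁) (x : G) {u v w : List G} (hu : IsReducedProd P u)
    (hv : IsReducedProd P v) (hw : IsReducedProd P w) (h : u.prod * v.prod = w.prod)
    {pa qa ra : Set X} (hpa : IsPathOf ι x u pa) (hqa : IsPathOf ι (x * u.prod) v qa)
    (hra : IsPathOf ι x w ra) : ThinTriangle (C₀ + 5 * C₁ + 23 / 2) pa qa ra := by
  have hconst : C₀ + 5 * C₁ + 23 / 2 = 3 / 2 + (C₀ + 3 * (C₁ + 5 / 2)) + (2 * C₁ + 5 / 2) := by ring
  have hxv : x * u.prod * v.prod = x * w.prod := by rw [mul_assoc, h]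
  rw [ThinTriangle, hconst]
  refine ⟨?_, union_comm ra pa ▸ ?_, union_comm qa pa ▸ ?_⟩
  · refine hX.path_subset_cthickening_union hC₁ hH1 hP.one_mem hv.2.1 hw.2.1 hpa hqa hra ?_
    exact fun g => hX.exists_mem_pathVertices_union hP hP6 hC₀ hC₁ hH1 hu hv hw h
  · refine hX.path_subset_cthickening_union hC₁ hH1 hP.one_mem hw.2.1 hu.2.1 hqa hra hpa ?_
    intro g hg
    rw [← pathVertices_invWord ι x w, ← pathVertices_invWord ι x u, ← hxv]
    exact hX.exists_mem_pathVertices_union hP hP6 hC₀ hC₁ hH1 hv (isReducedProd_invWord hP hw)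
      (isReducedProd_invWord hP hu) (by simp [prod_invWord, ← h]) hg
  · refine hX.path_subset_cthickening_union hC₁ hH1 hP.one_mem hv.2.1 hu.2.1 hra hqa hpa ?_
    intro g hg
    rw [← pathVertices_invWord ι (x * u.prod) v, hxv]
    exact hX.exists_mem_pathVertices_union hP hP6 hC₀ hC₁ hH1 hw (isReducedProd_invWord hP hv) hu
      (by simp [prod_invWord, ← h]) hg

/-- the triangle formed by paths defined by reduced products
representing `f`, `g` (based at `f`) and `fg` is uniformly thin. -/
theorem reduced_product_triangles_thin {G : Type*} [Group G] {X : Type*} [MetricSpace X]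
    (S : Set G) (hSfin : S.Finite) (ι : G → X) (hX : IsCayleyGraph S ι)
    (P : Set G) (hP : IsPregroupStructure P)
    (hP6 : AxiomP6 P) (hH0 : AxiomH0 P)
    (C₁ : ℝ) (hC₁ : 0 < C₁) (hH1 : AxiomH1 P ι C₁) :
    ∃ D₃ > (0 : ℝ), ∀ f g : G, ∀ u v w : List G,
      IsReducedProd P u → IsReducedProd P v → IsReducedProd P w →
      u.prod = f → v.prod = g → w.prod = f * g →
      ∀ pa qa ra : Set X,
        IsPathOf ι 1 u pa → IsPathOf ι f v qa → IsPathOf ι 1 w ra →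
        ThinTriangle D₃ pa qa ra := by
  obtain ⟨C₀, hC₀⟩ := (hH0.image fun b => (wordLength S b : ℝ)).bddAbove
  rw [mem_upperBounds, forall_mem_image] at hC₀
  have hC₀_nonneg : 0 ≤ C₀ := (Nat.cast_nonneg _).trans (hC₀ (bpSubgroup hP).one_mem)
  refine ⟨C₀ + 5 * C₁ + 23 / 2, by positivity, ?_⟩
  rintro _ _ u v w hu hv hw rfl rfl hprod pa qa ra hpa hqa hra
  exact reduced_product_triangles_thin_general hX hP hP6 (fun b hb => hC₀ hb) hC₁.le hH1 1 hu hv hw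
    hprod.symm hpa (by rwa [one_mul]) hra
end

section
/- B_P is a subgroup of G contained in P: 1 ∈ B_P; if b ∈ B_P then b^{-1} ∈ B_P; and if b, b' ∈ B_P then bb' ∈ P and bb' ∈ B_P. -/
open Metric Set

open scoped Pointwise in
/-- Inversion turns `P * b ⊆ P` into `b⁻¹ * P ⊆ P`. -/
theorem BP_eq_stabilizer {G : Type*} [Group G] {P : Set G} (one_mem : (1 : G) ∈ P)
    (inv_mem : ∀ x ∈ P, x⁻¹ ∈ P) : BP P = MulAction.stabilizer G P := by
  ext b
  simp only [SetLike.mem_coe, MulAction.mem_stabilizer_set, smul_eq_mul]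
  constructor
  · rintro ⟨-, hb⟩ z
    refine ⟨fun hbz => ?_, fun hz => (hb z hz).2⟩
    have hz_inv : (b * z)⁻¹ * b ∈ P := (hb _ (inv_mem _ hbz)).1
    simpa using inv_mem _ hz_inv
  · intro hb
    refine ⟨by simpa using (hb 1).2 one_mem, fun z hz => ⟨?_, (hb z).2 hz⟩⟩
    have hzb_inv : b⁻¹ * z⁻¹ ∈ P := (hb _).1 (by simpa using inv_mem z hz)
    simpa using inv_mem _ hzb_inv

theorem BP_subgroup_general {G : Type*} [Group G] (P : Set G) (one_mem : (1 : G) ∈ P)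
    (inv_mem : ∀ x ∈ P, x⁻¹ ∈ P) :
    (1 : G) ∈ BP P ∧ (∀ b ∈ BP P, b⁻¹ ∈ BP P) ∧
      ∀ b ∈ BP P, ∀ b' ∈ BP P, b * b' ∈ P ∧ b * b' ∈ BP P := by
  have mul_mem_P : ∀ b ∈ BP P, ∀ b' ∈ BP P, b * b' ∈ P := fun b hb b' hb' => (hb.2 b' hb'.1).2
  rw [BP_eq_stabilizer one_mem inv_mem] at mul_mem_P ⊢
  exact ⟨Subgroup.one_mem _, fun _ => Subgroup.inv_mem _,
    fun b hb b' hb' => ⟨mul_mem_P b hb b' hb', Subgroup.mul_mem _ hb hb'⟩⟩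

/-- `B_P` is a subgroup of `G` contained in `P`. -/
theorem BP_subgroup {G : Type*} [Group G] (P : Set G) (hP : IsPregroupStructure P) :
    (1 : G) ∈ BP P ∧ (∀ b ∈ BP P, b⁻¹ ∈ BP P) ∧
      ∀ b ∈ BP P, ∀ b' ∈ BP P, b * b' ∈ P ∧ b * b' ∈ BP P :=
  BP_subgroup_general P hP.one_mem hP.inv_mem
end

section
/- For every D > 0 there exists δ > 0, depending only on D, with the following property. Let (X, d) be a geodesic metric space and suppose that for every pair of points x, y ∈ X there is a path η(x,y) : [0,1] → X with η(x,y)(0) = x and η(x,y)(1) = y such that: (a) if d(x,y) ≤ 1, then the diameter of the image of η(x,y) is at most D; (b) for all x, y ∈ X and all 0 ≤ s ≤ t ≤ 1, the Hausdorff distance between η(x,y)([s,t]) and the image of η(η(x,y)(s), η(x,y)(t)) is at most D; (c) for all x, y, z ∈ X, the image of η(x,y) is contained in the closed D-neighborhood of the union of the images of η(x,z) and η(z,y). Then X is δ-hyperbolic: for all x, y, z, v ∈ X, (x·y)_v ≥ min{(x·z)_v, (z·y)_v} − 2δ, where (x·y)_v = (1/2)(d(x,v) + d(y,v) − d(x,y)).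 -/
open Metric Set

/-!
The argument concerns connected sets `L x y` containing `x` and `y`, in the spirit of Bowditch's
"guessing geodesics"; here they are the images of the paths.

Bisecting a path of length at most `2 ^ k` and using slimness of triangles at each stage shows that
`L x y` lies within `(k + 1) * D` of any such path from `x` to `y`. Now let `p ∈ L x y` have
distance `ρ` from a geodesic `[x, y]`, attained at `m`, and let `u`, `v` be the points of `[x, y]`
at distance `3 * ρ` from `m` on either side (or the endpoints). By slimness, `p` is `2 * D`-close to
one of `L x u`, `L u v` and `L v y`. In the middle case the logarithmic bound gives
`ρ = O(D * log ρ)`. In the outer cases induction on the length puts `p` within `2 * D + R` of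
`[x, u]` or `[v, y]`, while these segments are at distance at least `2 * ρ` from `p`. Hence `ρ ≤ R`
for a suitable `R` depending only on `D`.

Finally, by connectedness some `w ∈ L x y` is close to both `L x v` and `L v y`, hence to geodesics
`[x, v]` and `[v, y]`. Then `dist w v` is at most the Gromov product of `x` and `y` at `v` up to a
constant, while slimness bounds it from below by one of the two other Gromov products.
-/

open Filter

theorem eventually_exists_mul_le_two_pow {D : ℝ} (hD : 0 < D) (c d : ℝ) :
    ∀ᶠ ρ : ℝ in atTop, ∃ k : ℕ, c * ρ ≤ 2 ^ k ∧ (k + d) * D < ρ := by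
  have pow_large : ∀ᶠ k : ℕ in atTop, |c| * (2 * D) * (k + 1 : ℕ) ≤ 2 ^ (k + 1) / 2 := by
    have := (isLittleO_pow_const_const_pow_of_one_lt (R := ℝ) 1 one_lt_two).const_mul_left
      (|c| * (2 * D))
    filter_upwards [(tendsto_add_atTop_nat 1).eventually
      (this.def (show (0 : ℝ) < 1 / 2 by norm_num))] with k hk
    simp only [pow_one, norm_pow, Real.norm_ofNat] at hk
    linarith [Real.le_norm_self (|c| * (2 * D) * (k + 1 : ℕ))]
  have floor_tendsto : Tendsto (fun ρ : ℝ ↦ ⌊ρ / (2 * D)⌋₊) atTop atTop :=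
    tendsto_nat_floor_atTop.comp (tendsto_id.atTop_div_const (by positivity))
  filter_upwards [floor_tendsto.eventually pow_large, eventually_gt_atTop (2 * d * D),
    eventually_ge_atTop 0] with ρ hpow hd hρ
  refine ⟨⌊ρ / (2 * D)⌋₊, ?_, ?_⟩
  · have hlt : ρ < (⌊ρ / (2 * D)⌋₊ + 1) * (2 * D) :=
      (div_lt_iff₀ (by positivity)).1 (Nat.lt_floor_add_one _)
    rw [pow_succ, mul_div_cancel_right₀ _ two_ne_zero] at hpow
    push_cast at hpow
    calc c * ρ ≤ |c| * ((⌊ρ / (2 * D)⌋₊ + 1) * (2 * D)) := by gcongr; exact le_abs_self c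
      _ ≤ 2 ^ ⌊ρ / (2 * D)⌋₊ := by linarith
  · have hle : ⌊ρ / (2 * D)⌋₊ * (2 * D) ≤ ρ :=
      (le_div_iff₀ (by positivity)).1 (Nat.floor_le (by positivity))
    linarith

section PseudoEMetric

variable {X : Type*} [PseudoEMetricSpace X]

theorem mem_cthickening_add_of_subset {s t : Set X} {x : X} {q r : ℝ} (hq : 0 ≤ q) (hr : 0 ≤ r)
    (hx : x ∈ cthickening q s) (hst : s ⊆ cthickening r t) : x ∈ cthickening (q + r) t :=
  cthickening_cthickening_subset hq hr t (cthickening_subset_of_subset q hst hx)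

theorem exists_mem_inter_cthickening_of_subset {s t u : Set X} {r : ℝ} (hs : IsPreconnected s)
    (hsub : s ⊆ cthickening r (t ∪ u)) (ht : (s ∩ t).Nonempty) (hu : (s ∩ u).Nonempty) :
    ∃ w ∈ s, w ∈ cthickening r t ∧ w ∈ cthickening r u :=
  isPreconnected_closed_iff.1 hs _ _ isClosed_cthickening isClosed_cthickening
    (hsub.trans_eq (cthickening_union r t u))
    (ht.mono (inter_subset_inter_right s (self_subset_cthickening t)))
    (hu.mono (inter_subset_inter_right s (self_subset_cthickening u)))

end PseudoEMetric

section PseudoMetric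

variable {X : Type*} [PseudoMetricSpace X]

theorem le_of_mem_cthickening_of_forall_le_dist {s : Set X} {x : X} {r ρ : ℝ} (hr : 0 ≤ r)
    (hx : x ∈ cthickening r s) (hρ : ∀ y ∈ s, ρ ≤ dist x y) : ρ ≤ r := by
  rw [mem_cthickening_iff] at hx
  refine (ENNReal.ofReal_le_ofReal_iff hr).1 (le_trans ?_ hx)
  refine le_infEDist.2 fun y hy ↦ ?_
  rw [edist_dist]
  exact ENNReal.ofReal_le_ofReal (hρ y hy)

theorem le_add_of_mem_cthickening_of_subset {ι : Type*} {s : Set X} {I : Set ι} {f : ι → X}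
    {x : X} {q r ρ : ℝ} (hq : 0 ≤ q) (hr : 0 ≤ r) (hx : x ∈ cthickening q s)
    (hs : s ⊆ cthickening r (f '' I)) (hρ : ∀ t ∈ I, ρ ≤ dist x (f t)) : ρ ≤ q + r :=
  le_of_mem_cthickening_of_forall_le_dist (add_nonneg hq hr)
    (mem_cthickening_add_of_subset hq hr hx hs) (forall_mem_image.2 hρ)

theorem dist_add_dist_le_of_mem_cthickening {s : Set X} (hs : IsCompact s) {x y w : X} {c r : ℝ}
    (hr : 0 ≤ r) (hc : ∀ q ∈ s, dist x q + dist q y ≤ c) (hw : w ∈ cthickening r s) :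
    dist x w + dist w y ≤ c + 2 * r := by
  rw [hs.cthickening_eq_biUnion_closedBall hr, mem_iUnion₂] at hw
  obtain ⟨q, hq, hwq⟩ := hw
  rw [mem_closedBall] at hwq
  linarith [hc q hq, dist_triangle_right x w q, dist_triangle w q y]

theorem lipschitzOnWith_one_of_dist_eq {f : ℝ → X} {I : Set ℝ}
    (hf : ∀ s ∈ I, ∀ t ∈ I, dist (f s) (f t) = |s - t|) : LipschitzOnWith 1 f I :=
  .of_dist_le_mul fun s hs t ht ↦ by rw [hf s hs t ht, NNReal.coe_one, one_mul, Real.dist_eq]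

/-- The Gromov product `(x·y)_v` of `x` and `y` with respect to `v`, in terms of which
hyperbolicity is defined. -/
noncomputable def gromovProduct (x y v : X) : ℝ :=
  (dist x v + dist y v - dist x y) / 2

theorem gromovProduct_le_dist_add {x y w : X} {r : ℝ} (v : X)
    (hw : dist x w + dist w y ≤ dist x y + 2 * r) : gromovProduct x y v ≤ dist w v + r := by
  rw [gromovProduct]
  linarith [dist_triangle x w v, dist_triangle_left y v w]

theorem dist_le_gromovProduct_add {x y v w : X} {r : ℝ}
    (hxv : dist x w + dist w v ≤ dist x v + 2 * r) (hvy : dist v w + dist w y ≤ dist v y + 2 * r) :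
    dist w v ≤ gromovProduct x y v + 2 * r := by
  rw [gromovProduct]
  linarith [dist_triangle x w y, dist_comm v w, dist_comm v y]

/-- A family of sets `L x y`, thought of as coarse substitutes for geodesics from `x` to `y`: those
of nearby points are small, and triangles formed by them are slim. Smallness is expressed by a ball
rather than by `Metric.diam`, which vanishes on unbounded sets. -/
structure IsSlimFamily (D : ℝ) (L : X → X → Set X) : Prop where
  subset_closedBall : ∀ x y, dist x y ≤ 1 → L x y ⊆ closedBall x D
  subset_cthickening_union : ∀ x y z, L x y ⊆ cthickening D (L x z ∪ L z y)

namespace IsSlimFamily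

variable {D R : ℝ} {L : X → X → Set X} {f : ℝ → X} {a b : ℝ}

theorem subset_cthickening_union_union (hL : IsSlimFamily D L) (hD : 0 ≤ D) (x u v y : X) :
    L x y ⊆ cthickening (2 * D) (L x u ∪ L u v ∪ L v y) := by
  have hsub : L x v ∪ L v y ⊆ cthickening D (L x u ∪ L u v ∪ L v y) := by
    rw [cthickening_union]
    exact union_subset_union (hL.subset_cthickening_union x v u) (self_subset_cthickening _)
  rw [two_mul]
  exact fun p hp ↦
    mem_cthickening_add_of_subset hD hD (hL.subset_cthickening_union x y v hp) hsub

theorem subset_cthickening_image_Icc (hL : IsSlimFamily D L) (hD : 0 ≤ D) (hab : a ≤ b)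
    (hf : LipschitzOnWith 1 f (Icc a b)) {k : ℕ} (hk : b - a ≤ 2 ^ k) :
    L (f a) (f b) ⊆ cthickening ((k + 1) * D) (f '' Icc a b) := by
  induction k generalizing a b with
  | zero =>
    have hdist : dist (f a) (f b) ≤ 1 := by
      refine (hf.dist_le_mul a (left_mem_Icc.2 hab) b (right_mem_Icc.2 hab)).trans ?_
      rw [NNReal.coe_one, one_mul, dist_comm, Real.dist_eq, abs_of_nonneg (by linarith)]
      simpa using hk
    refine (hL.subset_closedBall _ _ hdist).trans ?_
    simpa using closedBall_subset_cthickening (mem_image_of_mem f (left_mem_Icc.2 hab)) D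
  | succ k ih =>
    rw [pow_succ] at hk
    have hal : a ≤ (a + b) / 2 := by linarith
    have hlb : (a + b) / 2 ≤ b := by linarith
    have left := ih hal (hf.mono (Icc_subset_Icc_right hlb)) (by linarith)
    have right := ih hlb (hf.mono (Icc_subset_Icc_left hal)) (by linarith)
    have halves := union_subset_union left right
    rw [← cthickening_union, ← image_union, Icc_union_Icc_eq_Icc hal hlb] at halves
    intro p hp
    have hsum : ((k + 1 : ℕ) + 1) * D = D + (k + 1) * D := by push_cast; ring
    rw [hsum]
    exact mem_cthickening_add_of_subset hD (by positivity)
      (hL.subset_cthickening_union _ _ (f ((a + b) / 2)) hp) halves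

theorem le_of_mem_cthickening_of_sub_le_two_pow (hL : IsSlimFamily D L) (hD : 0 ≤ D) (hab : a ≤ b)
    (hf : LipschitzOnWith 1 f (Icc a b)) {k : ℕ} (hk : b - a ≤ 2 ^ k) {p : X} {ρ : ℝ}
    (hp : p ∈ cthickening (2 * D) (L (f a) (f b))) (hρ : ∀ r ∈ Icc a b, ρ ≤ dist p (f r)) :
    ρ ≤ (k + 3) * D := by
  have := le_add_of_mem_cthickening_of_subset (by positivity) (by positivity) hp
    (hL.subset_cthickening_image_Icc hD hab hf hk) hρ
  linarith

theorem exists_subinterval_mem_cthickening (hL : IsSlimFamily D L) (hD : 0 ≤ D) {m : ℝ}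
    (hm : m ∈ Icc a b) {c : ℝ} (hc : 0 ≤ c) {p : X} (hp : p ∈ L (f a) (f b)) :
    ∃ s t, a ≤ s ∧ s ≤ t ∧ t ≤ b ∧ p ∈ cthickening (2 * D) (L (f s) (f t)) ∧
      (t - s ≤ 2 * c ∨ t ≤ m - c ∨ m + c ≤ s) := by
  obtain ⟨ham, hmb⟩ := hm
  have hau : a ≤ max a (m - c) := le_max_left _ _
  have hum : max a (m - c) ≤ m := max_le ham (by linarith)
  have hmv : m ≤ min b (m + c) := le_min hmb (by linarith)
  have hvb : min b (m + c) ≤ b := min_le_left _ _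
  have hpieces := hL.subset_cthickening_union_union hD
    (f a) (f (max a (m - c))) (f (min b (m + c))) (f b) hp
  rw [cthickening_union, cthickening_union] at hpieces
  rcases hpieces with (hpl | hpm) | hpr
  · refine ⟨a, _, le_rfl, hau, hum.trans hmb, hpl, ?_⟩
    rcases max_choice a (m - c) with h | h <;> rw [h]
    · left; linarith
    · right; left; rfl
  · refine ⟨_, _, hau, hum.trans hmv, hvb, hpm, Or.inl ?_⟩
    linarith [le_max_right a (m - c), min_le_right b (m + c)]
  · refine ⟨_, b, ham.trans hmv, hvb, le_rfl, hpr, ?_⟩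
    rcases min_choice b (m + c) with h | h <;> rw [h]
    · left; linarith
    · right; right; rfl

theorem subset_cthickening_geodesic_of_shorter (hL : IsSlimFamily D L) (hD : 0 ≤ D) (hR : 1 ≤ R)
    (hlog : ∀ ρ ≥ R, ∃ k : ℕ, 6 * ρ ≤ 2 ^ k ∧ (k + 3) * D < ρ) (hab : a ≤ b)
    (hf : ∀ s ∈ Icc a b, ∀ t ∈ Icc a b, dist (f s) (f t) = |s - t|)
    (hshort : ∀ s t, a ≤ s → s ≤ t → t ≤ b → t - s ≤ b - a - 1 →
      L (f s) (f t) ⊆ cthickening R (f '' Icc s t)) :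
    L (f a) (f b) ⊆ cthickening R (f '' Icc a b) := by
  intro p hp
  have hlip := lipschitzOnWith_one_of_dist_eq hf
  obtain ⟨m, hm, hmin⟩ : ∃ m ∈ Icc a b, ∀ r ∈ Icc a b, dist p (f m) ≤ dist p (f r) :=
    isCompact_Icc.exists_isMinOn (nonempty_Icc.2 hab)
      ((continuous_const.dist continuous_id).comp_continuousOn hlip.continuousOn)
  refine mem_cthickening_of_dist_le p (f m) R _ (mem_image_of_mem f hm) ?_
  set ρ := dist p (f m)
  by_contra! hRρ
  obtain ⟨k, hk, hkρ⟩ := hlog ρ hRρ.le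
  obtain ⟨s, t, has, hst, htb, hpst, hshort_or_far⟩ :=
    hL.exists_subinterval_mem_cthickening hD hm (c := 3 * ρ) (by positivity) hp
  have hsub : Icc s t ⊆ Icc a b := Icc_subset_Icc has htb
  rcases hshort_or_far with hlen | hfar
  · have hle := hL.le_of_mem_cthickening_of_sub_le_two_pow hD hst (hlip.mono hsub)
      (by linarith) hpst fun r hr ↦ hmin r (hsub hr)
    linarith
  · have hlen : t - s ≤ b - a - 1 := by rcases hfar with h | h <;> linarith [hm.1, hm.2]
    have far : ∀ r ∈ Icc s t, 2 * ρ ≤ dist p (f r) := by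
      intro r hr
      have hmr : 3 * ρ ≤ dist (f m) (f r) := by
        rw [hf m hm r (hsub hr), le_abs]
        exact hfar.imp (fun h ↦ by linarith [hr.2]) (fun h ↦ by linarith [hr.1])
      linarith [dist_triangle_left (f m) (f r) p]
    have hle := le_add_of_mem_cthickening_of_subset (by positivity) (by positivity) hpst
      (hshort s t has hst htb hlen) far
    linarith [show 0 ≤ k * D by positivity]

theorem subset_cthickening_geodesic (hL : IsSlimFamily D L) (hD : 0 ≤ D) (hR : 1 ≤ R)
    (hlog : ∀ ρ ≥ R, ∃ k : ℕ, 6 * ρ ≤ 2 ^ k ∧ (k + 3) * D < ρ) (hab : a ≤ b)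
    (hf : ∀ s ∈ Icc a b, ∀ t ∈ Icc a b, dist (f s) (f t) = |s - t|) :
    L (f a) (f b) ⊆ cthickening R (f '' Icc a b) := by
  obtain ⟨n, hn⟩ := exists_nat_gt (b - a)
  induction n generalizing a b with
  | zero => exact absurd hab (by simpa using hn)
  | succ n ih =>
    refine hL.subset_cthickening_geodesic_of_shorter hD hR hlog hab hf
      fun s t has hst htb hlen ↦ ih hst (fun r hr r' hr' ↦ ?_) ?_
    · exact hf r (Icc_subset_Icc has htb hr) r' (Icc_subset_Icc has htb hr')
    · push_cast at hn
      linarith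

end IsSlimFamily

end PseudoMetric

section GeodesicSpace

variable {X : Type*} [MetricSpace X]

theorem IsGeodesicParam.dist_add_dist_eq {f : ℝ → X} {x y q : X} (hf : IsGeodesicParam f x y)
    (hq : q ∈ f '' Icc 0 (dist x y)) : dist x q + dist q y = dist x y := by
  obtain ⟨hx, hy, hdist⟩ := hf
  obtain ⟨t, ht, rfl⟩ := hq
  have hxt := hdist 0 ⟨le_rfl, dist_nonneg⟩ t ht
  have hty := hdist t ht _ ⟨dist_nonneg, le_rfl⟩
  rw [hx, zero_sub, abs_neg, abs_of_nonneg ht.1] at hxt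
  rw [hy, abs_sub_comm, abs_of_nonneg (sub_nonneg.2 ht.2)] at hty
  linarith

theorem IsSlimFamily.dist_add_dist_le {D R : ℝ} {L : X → X → Set X} (hL : IsSlimFamily D L)
    (hX : IsGeodesicSpace X) (hD : 0 ≤ D) (hR : 1 ≤ R)
    (hlog : ∀ ρ ≥ R, ∃ k : ℕ, 6 * ρ ≤ 2 ^ k ∧ (k + 3) * D < ρ) {x y w : X}
    (hw : w ∈ cthickening D (L x y)) : dist x w + dist w y ≤ dist x y + 2 * (D + R) := by
  obtain ⟨_, f, hf, -⟩ := hX x y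
  have hnear := hL.subset_cthickening_geodesic hD hR hlog dist_nonneg hf.2.2
  rw [hf.1, hf.2.1] at hnear
  have hcompact : IsCompact (f '' Icc 0 (dist x y)) := isCompact_Icc.image_of_continuousOn
    (lipschitzOnWith_one_of_dist_eq hf.2.2).continuousOn
  exact dist_add_dist_le_of_mem_cthickening hcompact (by positivity)
    (fun q hq ↦ (hf.dist_add_dist_eq hq).le)
    (mem_cthickening_add_of_subset hD (by positivity) hw hnear)

end GeodesicSpace

theorem hyperbolicity_criterion_general :
    ∀ D : ℝ, 0 < D → ∃ δ > (0 : ℝ), ∀ (X : Type*) [MetricSpace X],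
      IsGeodesicSpace X → ∀ L : X → X → Set X, IsSlimFamily D L →
        (∀ x y, IsPreconnected (L x y)) → (∀ x y, x ∈ L x y) → (∀ x y, y ∈ L x y) →
        ∀ x y z v : X, gromovProduct x y v ≥
          min (gromovProduct x z v) (gromovProduct z y v) - 2 * δ := by
  intro D hD
  obtain ⟨R, hR⟩ := eventually_atTop.1 <| (eventually_ge_atTop (1 : ℝ)).and
    (eventually_forall_ge_atTop.2 (eventually_exists_mul_le_two_pow hD 6 3))
  obtain ⟨hR1, hlog⟩ := hR R le_rfl
  refine ⟨3 * (D + R) / 2, by positivity, ?_⟩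
  intro X _ hX L hL hconn hleft hright x y z v
  have near_geodesic {x y w : X} (hw : w ∈ cthickening D (L x y)) :
      dist x w + dist w y ≤ dist x y + 2 * (D + R) :=
    hL.dist_add_dist_le hX hD.le hR1 hlog hw
  obtain ⟨w, hw, hwxv, hwvy⟩ := exists_mem_inter_cthickening_of_subset (hconn x y)
    (hL.subset_cthickening_union x y v) ⟨x, hleft x y, hleft x v⟩ ⟨y, hright x y, hright v y⟩
  have upper := dist_le_gromovProduct_add (near_geodesic hwxv) (near_geodesic hwvy)
  have hwz := hL.subset_cthickening_union x y z hw
  rw [cthickening_union] at hwz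
  have lower : min (gromovProduct x z v) (gromovProduct z y v) ≤ dist w v + (D + R) :=
    min_le_iff.2 <| hwz.imp (fun h ↦ gromovProduct_le_dist_add v (near_geodesic h))
      (fun h ↦ gromovProduct_le_dist_add v (near_geodesic h))
  linarith

/-- Bowditch–Hamenstädt hyperbolicity criterion: if a geodesic
metric space admits a family of paths `η(x,y)` satisfying (a), (b), (c) with
constant `D`, then it is `δ`-hyperbolic for some `δ` depending only on `D`. -/
theorem hyperbolicity_criterion :
    ∀ D : ℝ, 0 < D → ∃ δ > (0 : ℝ), ∀ (X : Type*) [MetricSpace X],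
      IsGeodesicSpace X →
      ∀ η : X → X → ℝ → X,
        (∀ x y : X, ContinuousOn (η x y) (Icc (0 : ℝ) 1)) →
        (∀ x y : X, η x y 0 = x) → (∀ x y : X, η x y 1 = y) →
        (∀ x y : X, dist x y ≤ 1 → Metric.diam (η x y '' Icc (0 : ℝ) 1) ≤ D) →
        (∀ x y : X, ∀ s t : ℝ, 0 ≤ s → s ≤ t → t ≤ 1 →
          hausdorffDist (η x y '' Icc s t)
            (η (η x y s) (η x y t) '' Icc (0 : ℝ) 1) ≤ D) →
        (∀ x y z : X, η x y '' Icc (0 : ℝ) 1 ⊆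
          cthickening D ((η x z '' Icc (0 : ℝ) 1) ∪ (η z y '' Icc (0 : ℝ) 1))) →
        ∀ x y z v : X,
          (dist x v + dist y v - dist x y) / 2 ≥
            min ((dist x v + dist z v - dist x z) / 2)
              ((dist z v + dist y v - dist z y) / 2) - 2 * δ := by
  intro D hD
  obtain ⟨δ, hδ, H⟩ := hyperbolicity_criterion_general D hD
  refine ⟨δ, hδ, fun X _ hX η hcont h0 h1 hdiam _ hslim ↦
    H X hX (fun x y ↦ η x y '' Icc 0 1) ⟨fun x y hxy p hp ↦ ?_, hslim⟩
      (fun x y ↦ isPreconnected_Icc.image _ (hcont x y))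
      (fun x y ↦ ⟨0, by simp, h0 x y⟩) (fun x y ↦ ⟨1, by simp, h1 x y⟩)⟩
  have hbdd := (isCompact_Icc.image_of_continuousOn (hcont x y)).isBounded
  exact (dist_le_diam_of_mem hbdd hp ⟨0, by simp, h0 x y⟩).trans (hdiam x y hxy)
end

section
/- P satisfies axiom (P6) if and only if P satisfies axiom (P6'), where (P6'): for all x, y ∈ P with xy ∉ P, if there exists a ∈ P with ax ∈ P and (ax)y ∈ P, then ax ∈ B_P. -/
open Metric Set

/-- Axiom (P6'). -/
def AxiomP6' {G : Type*} [Group G] (P : Set G) : Prop :=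
  ∀ x ∈ P, ∀ y ∈ P, x * y ∉ P → ∀ a ∈ P, a * x ∈ P → a * x * y ∈ P → a * x ∈ BP P

section InvClosed

variable {G : Type*} [Group G] {P : Set G}

lemma inv_mem_BP (hinv : ∀ x ∈ P, x⁻¹ ∈ P) {b : G} (hb : b ∈ BP P) : b⁻¹ ∈ BP P := by
  obtain ⟨hbP, hmul⟩ := hb
  refine ⟨hinv b hbP, fun z hz => ?_⟩
  obtain ⟨hright, hleft⟩ := hmul z⁻¹ (hinv z hz)
  exact ⟨by simpa using hinv _ hleft, by simpa using hinv _ hright⟩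

lemma inv_mem_BP_iff (hinv : ∀ x ∈ P, x⁻¹ ∈ P) {b : G} : b⁻¹ ∈ BP P ↔ b ∈ BP P :=
  ⟨fun hb => inv_inv b ▸ inv_mem_BP hinv hb, inv_mem_BP hinv⟩

-- The mutually inverse substitutions `a ↦ (a * x)⁻¹` and `a ↦ (x * a)⁻¹` exchange the premises of
-- the two axioms and invert the element claimed to lie in `BP P`.
theorem axiomP6_iff_axiomP6'_general (hinv : ∀ x ∈ P, x⁻¹ ∈ P) :
    AxiomP6 P ↔ AxiomP6' P := by
  constructor
  · intro h x hx y hy hxy a ha hax haxy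
    have hxc : x * (a * x)⁻¹ ∈ P := by simpa using hinv a ha
    have hcy : (a * x)⁻¹⁻¹ * y ∈ P := by rwa [inv_inv]
    exact (inv_mem_BP_iff hinv).mp (h x hx y hy hxy (a * x)⁻¹ (hinv _ hax) hxc hcy)
  · intro h x hx y hy hxy a ha hxa hay
    have hcx : (x * a)⁻¹ * x = a⁻¹ := by group
    have ha_inv : a⁻¹ ∈ BP P := by
      simpa only [hcx] using
        h x hx y hy hxy (x * a)⁻¹ (hinv _ hxa) (hcx ▸ hinv a ha) (hcx ▸ hay)
    exact (inv_mem_BP_iff hinv).mp ha_inv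

end InvClosed

/-- axioms (P6) and (P6') are equivalent. -/
theorem axiomP6_iff_axiomP6' {G : Type*} [Group G]
    (P : Set G) (hP : IsPregroupStructure P) :
    AxiomP6 P ↔ AxiomP6' P :=
  axiomP6_iff_axiomP6'_general hP.inv_mem
end
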